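/- arXiv:1104.2810 — 3 statements merged into one kernel-verified Lean document; each statement's English description precedes it below -/
import Mathlib

section
/- With weights w_n = ((n−1)!)^α, 0 < α < 1, and 1 ≤ i < 1/α, the number X_{i+1,N} of vertices of degree i+1 in T_N satisfies X_{i+1,N}/n_i → 1 in probability as N → ∞, where n_i = (i!)^α N^{1−iα}. -/
open Filter

/-- Rooted planar trees (the tree hanging from the vertex `s` next to the root `r`;
the full tree of the paper with `N` edges corresponds to a `PTree` with `N` vertices,
plus the extra root `r` of degree 1 attached to the root `s` of the `PTree`). -/
inductive PTree : Type where
  | node : List PTree → PTree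

namespace PTree

/-- The (ordered) subtrees attached to the root. -/
def children : PTree → List PTree
  | node ts => ts

/-- Number of vertices of the `PTree`, i.e. the number `N` of edges of the paper's tree. -/
def size : PTree → ℕ
  | node ts => 1 + (ts.attach.map (fun t => size t.1)).sum
decreasing_by simp [PTree.node.sizeOf_spec]; have := List.sizeOf_lt_of_mem t.2; omega

/-- The weight `∏_{v ≠ r} w_{σ(v)}`: every vertex `v ≠ r` has degree `outdeg(v) + 1`. -/
noncomputable def weight (w : ℕ → ℝ) : PTree → ℝ
  | node ts => w (ts.length + 1) * (ts.attach.map (fun t => weight w t.1)).prod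
decreasing_by simp [PTree.node.sizeOf_spec]; have := List.sizeOf_lt_of_mem t.2; omega

/-- The number of vertices of outdegree `k`, i.e. the number `X_{k+1}` of vertices
(other than `r`) of degree `k+1`. -/
def countOutdeg (k : ℕ) : PTree → ℕ
  | node ts => (if ts.length = k then 1 else 0) + (ts.attach.map (fun t => countOutdeg k t.1)).sum
decreasing_by simp [PTree.node.sizeOf_spec]; have := List.sizeOf_lt_of_mem t.2; omega

/-- The maximal outdegree of a vertex of the tree. -/
def maxOutdeg : PTree → ℕ
  | node ts => max ts.length ((ts.attach.map (fun t => maxOutdeg t.1)).foldr max 0)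
decreasing_by simp [PTree.node.sizeOf_spec]; have := List.sizeOf_lt_of_mem t.2; omega

/-- Outdegree of the first (leftmost) child `s₁` of `s` (0 if there is none). -/
def firstChildOutdeg : PTree → ℕ
  | node [] => 0
  | node (t :: _) => t.children.length

end PTree

/-- The partition function `Z_N = Σ_{τ ∈ Γ_N} ∏_{v ∈ V(τ)∖{r}} w_{σ(v)}`. -/
noncomputable def Zfun (w : ℕ → ℝ) (N : ℕ) : ℝ :=
  ∑' t : {t : PTree // t.size = N}, t.1.weight w

/-- `ν_N(P)`: probability of the event `P` under the simply generated measure `ν_N`. -/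
noncomputable def nu (w : ℕ → ℝ) (N : ℕ) (P : PTree → Prop) : ℝ :=
  (∑' t : {t : PTree // t.size = N ∧ P t}, t.1.weight w) / Zfun w N

open PowerSeries in
theorem aux_coeff_mul (f : PowerSeries ℝ) (n m : ℕ) :
    coeff m (f ^ (n+1)) = ∑ d ∈ Finset.range (m+1), coeff d f * coeff (m-d) (f^n) := by
  rw [pow_succ', PowerSeries.coeff_mul, Finset.Nat.sum_antidiagonal_eq_sum_range_succ
    (fun a b => coeff a f * coeff b (f^n))]

open PowerSeries in
theorem aux_coeff_der (f : PowerSeries ℝ) (n m : ℕ) :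
    (m:ℝ) * coeff m (f ^ (n+1)) =
      (n+1) * ∑ d ∈ Finset.range (m+1), (d:ℝ) * coeff d f * coeff (m-d) (f^n) := by
  cases m with
  | zero => simp
  | succ m =>
    rw [Finset.sum_range_succ']
    have h := congrArg (coeff m) (Derivation.leibniz_pow (PowerSeries.derivative ℝ) (a := f) (n+1))
    rw [PowerSeries.coeff_derivative] at h
    simp only [Nat.add_sub_cancel, smul_eq_mul, nsmul_eq_mul] at h
    rw [mul_comm (f^n), ← map_natCast (C : ℝ →+* PowerSeries ℝ), PowerSeries.coeff_C_mul,
      PowerSeries.coeff_mul, Finset.Nat.sum_antidiagonal_eq_sum_range_succ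
      (fun a b => coeff a (PowerSeries.derivative ℝ f) * coeff b (f^n))] at h
    rw [mul_comm]
    push_cast at h ⊢
    rw [h]
    simp only [PowerSeries.coeff_derivative]
    simp
    left
    apply Finset.sum_congr rfl
    intro x hx
    ring

namespace PTree

theorem size_node (ts : List PTree) : (node ts).size = 1 + (ts.map size).sum := by
  rw [size, List.attach_map_val (f := size)]
theorem weight_node (w : ℕ → ℝ) (ts : List PTree) :
    (node ts).weight w = w (ts.length+1) * (ts.map (weight w)).prod := by
  rw [weight, List.attach_map_val (f := weight w)]
theorem count_node (k : ℕ) (ts : List PTree) :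
    (node ts).countOutdeg k = (if ts.length = k then 1 else 0) + (ts.map (countOutdeg k)).sum := by
  rw [countOutdeg, List.attach_map_val (f := countOutdeg k)]

open Classical in
noncomputable def forests : ℕ → ℕ → Finset (List PTree)
  | 0, 0 => {[]}
  | 0, _+1 => ∅
  | _+1, 0 => ∅
  | N+1, k+1 => (Finset.range (N+1)).biUnion fun d =>
      (forests N (k+d)).image fun l => node (l.take d) :: l.drop d

theorem size_pos (t : PTree) : 1 ≤ t.size := by
  cases t with
  | node ts => rw [size_node]; omega

theorem len_le (l : List PTree) : l.length ≤ (l.map size).sum := by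
  induction l with
  | nil => simp
  | cons a l ih => have := size_pos a; simp; omega

theorem mem_forests (N k : ℕ) (l : List PTree) :
    l ∈ forests N k ↔ l.length = k ∧ (l.map size).sum = N := by
  induction N generalizing k l with
  | zero =>
    cases k with
    | zero => simp [forests]; rintro rfl; simp
    | succ k =>
      simp only [forests, Finset.notMem_empty, false_iff, not_and]
      intro h h'
      have := len_le l; omega
  | succ N ih =>
    cases k with
    | zero =>
      simp only [forests, Finset.notMem_empty, false_iff, not_and, List.length_eq_zero_iff]
      rintro rfl; simp
    | succ k =>
      simp only [forests, Finset.mem_biUnion, Finset.mem_range, Finset.mem_image, ih]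
      constructor
      · rintro ⟨d, hd, l', ⟨h1, h2⟩, rfl⟩
        constructor
        · simp; omega
        · have : ((l'.take d ++ l'.drop d).map size).sum = N := by
            rw [List.take_append_drop]; exact h2
          rw [List.map_append, List.sum_append] at this
          rw [List.map_cons, List.sum_cons, size_node]; omega
      · rintro ⟨h1, h2⟩
        cases l with
        | nil => simp at h1
        | cons t l =>
          cases t with
          | node ts =>
            rw [List.map_cons, List.sum_cons, size_node] at h2
            have h3 := len_le ts
            simp at h1
            refine ⟨ts.length, by omega, ts ++ l, ⟨by simp; omega, ?_⟩, by simp⟩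
            rw [List.map_append, List.sum_append]; omega

noncomputable def S (w : ℕ → ℝ) (N k : ℕ) : ℝ := ∑ l ∈ forests N k, (l.map (weight w)).prod

theorem S_zero (w : ℕ → ℝ) (N k : ℕ) (h : N < k) : S w N k = 0 := by
  apply Finset.sum_eq_zero
  intro l hl
  rw [mem_forests] at hl
  have := len_le l
  omega

theorem S_succ (w : ℕ → ℝ) (N k : ℕ) :
    S w (N+1) (k+1) = ∑ d ∈ Finset.range (N+1), w (d+1) * S w N (k+d) := by
  classical
  rw [S, forests, Finset.sum_biUnion]
  · apply Finset.sum_congr rfl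
    intro d hd
    rw [S, Finset.sum_image, Finset.mul_sum]
    · apply Finset.sum_congr rfl
      intro l hl
      rw [mem_forests] at hl
      have h2 : ((l.take d ++ l.drop d).map (weight w)).prod = (l.map (weight w)).prod := by
        rw [List.take_append_drop]
      rw [List.map_append, List.prod_append] at h2
      rw [List.map_cons, List.prod_cons, weight_node, ← h2, mul_assoc, List.length_take,
        min_eq_left (by omega)]
    · intro l hl l' hl' h
      simp only [List.cons.injEq, node.injEq] at h
      rw [← List.take_append_drop d l, ← List.take_append_drop d l', h.1, h.2]
  · intro d hd d' hd' hne
    simp only [Function.onFun]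
    rw [Finset.disjoint_left]
    intro x hx hx'
    simp only [Finset.mem_image, mem_forests] at hx hx'
    obtain ⟨l, hl, rfl⟩ := hx
    obtain ⟨l', hl', h⟩ := hx'
    simp only [List.cons.injEq, node.injEq] at h
    have := congrArg List.length h.1
    simp only [List.length_take] at this
    omega

open PowerSeries in
theorem cyc (w : ℕ → ℝ) (N m k : ℕ) (h : k + m = N) :
    (N:ℝ) * S w N k = k * coeff m ((PowerSeries.mk fun j => w (j+1)) ^ N) := by
  induction N generalizing m k with
  | zero => 
    have : k = 0 := by omega
    simp [this]
  | succ N ih =>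
    cases k with
    | zero => simp [S, forests]
    | succ k =>
      rw [S_succ]
      rcases Nat.eq_zero_or_pos N with rfl | hN
      · have hk : k = 0 := by omega
        have hm : m = 0 := by omega
        subst hk; subst hm
        simp [S, forests]
      · have hsub : Finset.range (m+1) ⊆ Finset.range (N+1) := by
          apply Finset.range_subset_range.2; omega
        rw [← Finset.sum_subset hsub]
        · have hN' : (N:ℝ) ≠ 0 := by positivity
          apply mul_left_cancel₀ hN'
          have e1 : (N:ℝ) * ∑ x ∈ Finset.range (m+1), w (x+1) * S w N (k+x) =
            k * coeff m ((PowerSeries.mk fun j => w (j+1)) ^ (N+1)) +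
            ∑ d ∈ Finset.range (m+1), (d:ℝ) * coeff d (PowerSeries.mk fun j => w (j+1)) *
              coeff (m-d) ((PowerSeries.mk fun j => w (j+1))^N) := by
            rw [aux_coeff_mul, Finset.mul_sum, Finset.mul_sum, ← Finset.sum_add_distrib]
            apply Finset.sum_congr rfl
            intro d hd
            rw [Finset.mem_range] at hd
            have := ih (m-d) (k+d) (by omega)
            rw [mul_left_comm, this, PowerSeries.coeff_mk]
            push_cast; ring
          have e2 := aux_coeff_der (PowerSeries.mk fun j => w (j+1)) N m
          have e3 : (N:ℝ) = k + m := by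
            have : N = k + m := by omega
            exact_mod_cast this
          push_cast
          rw [mul_left_comm, e1, mul_add, ← e2, e3]
          ring
        · intro x hx hx'
          simp at hx hx'
          rw [S_zero _ _ _ (by omega), mul_zero]

open Classical in
noncomputable def trees (N : ℕ) : Finset PTree := (forests N 1).image (fun l => l.headD (node []))

theorem mem_trees (N : ℕ) (t : PTree) : t ∈ trees N ↔ t.size = N := by
  simp only [trees, Finset.mem_image, mem_forests]
  constructor
  · rintro ⟨l, ⟨h1, h2⟩, rfl⟩
    obtain ⟨a, rfl⟩ := List.length_eq_one_iff.1 h1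
    simpa using h2
  · intro h
    exact ⟨[t], by simpa using h, rfl⟩

theorem sum_trees (w : ℕ → ℝ) (N : ℕ) : ∑ t ∈ trees N, t.weight w = S w N 1 := by
  classical
  rw [trees, Finset.sum_image, S]
  · apply Finset.sum_congr rfl
    intro l hl
    rw [mem_forests] at hl
    obtain ⟨a, rfl⟩ := List.length_eq_one_iff.1 hl.1
    simp
  · intro l hl l' hl' h
    simp only [Finset.mem_coe, mem_forests] at hl hl'
    obtain ⟨a, rfl⟩ := List.length_eq_one_iff.1 hl.1
    obtain ⟨b, rfl⟩ := List.length_eq_one_iff.1 hl'.1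
    simpa using h

theorem weight_u (w : ℕ → ℝ) (i : ℕ) (u : ℝ) : ∀ t : PTree,
    t.weight (fun k => if k = i+1 then u * w k else w k) = u ^ (t.countOutdeg i) * t.weight w
  | node ts => by
    have ih : ∀ t ∈ ts, t.weight (fun k => if k = i+1 then u * w k else w k) = 
        u ^ (t.countOutdeg i) * t.weight w := fun t ht => weight_u w i u t
    rw [weight_node, weight_node, count_node, List.map_congr_left ih]
    have : (ts.map fun t => u ^ (t.countOutdeg i) * t.weight w).prod =
        u ^ (ts.map (countOutdeg i)).sum * (ts.map (weight w)).prod := by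
      clear ih
      induction ts with
      | nil => simp
      | cons a l ih => simp [ih, pow_add]; ring
    rw [this]
    by_cases h : ts.length = i
    · simp [h, pow_add]; ring
    · simp [h]; ring

open PowerSeries in
theorem moments (w : ℕ → ℝ) (i N j : ℕ) (hN : 1 ≤ N) (hj : i * j + 1 ≤ N) (hjN : j ≤ N) :
    (N:ℝ) * ∑ t ∈ trees N, ((t.countOutdeg i).choose j : ℝ) * t.weight w =
      (N.choose j : ℝ) * w (i+1) ^ j *
        coeff (N-1-i*j) ((PowerSeries.mk fun k => w (k+1)) ^ (N-j)) := by
  set F : PowerSeries ℝ := PowerSeries.mk fun k => w (k+1) with hF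
  -- polynomial identity
  have key : ∀ x : ℝ, (N:ℝ) * ∑ t ∈ trees N, (x+1) ^ (t.countOutdeg i) * t.weight w =
      ∑ j ∈ Finset.range (N+1), x ^ j * w (i+1) ^ j * N.choose j *
        (if i * j ≤ N-1 then coeff (N-1-i*j) (F ^ (N-j)) else 0) := by
    intro x
    have h1 := cyc (fun k => if k = i+1 then (x+1) * w k else w k) N (N-1) 1 (by omega)
    rw [← sum_trees] at h1
    simp only [weight_u] at h1
    rw [h1]
    have h2 : (PowerSeries.mk fun j => if j+1 = i+1 then (x+1) * w (j+1) else w (j+1)) =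
        C (x * w (i+1)) * X ^ i + F := by
      ext n
      simp only [coeff_mk, map_add, coeff_C_mul, coeff_X_pow, hF]
      by_cases h : n = i
      · simp [h]; ring
      · simp [h]
    rw [h2, add_pow, map_sum]
    simp only [Nat.cast_one, one_mul]
    apply Finset.sum_congr rfl
    intro j hj
    rw [mul_pow, ← pow_mul, ← map_pow, mul_assoc, mul_assoc, coeff_C_mul, coeff_X_pow_mul',
      mul_comm (F ^ (N-j)), ← map_natCast (C : ℝ →+* PowerSeries ℝ), coeff_C_mul]
    split_ifs
    · rw [mul_pow]; ring
    · simp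
  have hp : Polynomial.C (N:ℝ) * ∑ t ∈ trees N,
      (Polynomial.X+1) ^ (t.countOutdeg i) * Polynomial.C (t.weight w) =
      ∑ j ∈ Finset.range (N+1), Polynomial.C (w (i+1) ^ j * N.choose j *
        (if i * j ≤ N-1 then coeff (N-1-i*j) (F ^ (N-j)) else 0)) * Polynomial.X ^ j := by
    apply Polynomial.funext
    intro x
    simp only [Polynomial.eval_mul, Polynomial.eval_C, Polynomial.eval_finsetSum,
      Polynomial.eval_pow, Polynomial.eval_add, Polynomial.eval_X, Polynomial.eval_one]
    rw [key]
    apply Finset.sum_congr rfl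
    intro j hj
    ring
  have hc := congrArg (fun p => Polynomial.coeff p j) hp
  simp only [Polynomial.coeff_C_mul, Polynomial.finsetSum_coeff, Polynomial.coeff_mul_C,
    Polynomial.coeff_X_add_one_pow, Polynomial.coeff_X_pow, mul_ite, mul_one, mul_zero,
    Finset.sum_ite_eq, Finset.mem_range] at hc
  rw [hc, if_pos (by omega), if_pos (by omega)]
  ring

theorem tsum_trees (w : ℕ → ℝ) (N : ℕ) (P : PTree → Prop) [DecidablePred P] :
    (∑' t : {t : PTree // t.size = N ∧ P t}, t.1.weight w) =
      ∑ t ∈ trees N with P t, t.weight w := by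
  have h : {t : PTree | t.size = N ∧ P t} = ↑((trees N).filter P) := by
    ext t; simp [mem_trees]
  have := Finset.tsum_subtype ((trees N).filter P) (fun t => t.weight w)
  rw [← this]
  change (∑' t : ({t : PTree | t.size = N ∧ P t} : Set PTree), t.1.weight w) = _
  rw [h]
  rfl

theorem Zfun_eq (w : ℕ → ℝ) (N : ℕ) : Zfun w N = ∑ t ∈ trees N, t.weight w := by
  have h : {t : PTree | t.size = N} = ↑(trees N) := by
    ext t; simp [mem_trees]
  have := Finset.tsum_subtype (trees N) (fun t => t.weight w)
  rw [← this]
  change (∑' t : ({t : PTree | t.size = N} : Set PTree), t.1.weight w) = _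
  rw [h]
  rfl

theorem weight_nonneg (w : ℕ → ℝ) (hw : ∀ k, 0 ≤ w k) : ∀ t : PTree, 0 ≤ t.weight w
  | node ts => by
    rw [weight_node]
    apply mul_nonneg (hw _)
    apply List.prod_nonneg
    intro a ha
    obtain ⟨t, ht, rfl⟩ := List.mem_map.1 ha
    exact weight_nonneg w hw t

end PTree

namespace SG
open PowerSeries

noncomputable def F (α : ℝ) : PowerSeries ℝ := PowerSeries.mk fun k => (k.factorial : ℝ) ^ α
noncomputable def G (α : ℝ) (L : ℕ) : PowerSeries ℝ :=
  PowerSeries.mk fun k => if k ≤ L then (k.factorial : ℝ) ^ α else 0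
noncomputable def H (α : ℝ) (L : ℕ) : PowerSeries ℝ :=
  PowerSeries.mk fun k => if k ≤ L then 0 else (k.factorial : ℝ) ^ α
noncomputable def A (α : ℝ) (n m : ℕ) : ℝ := coeff m (F α ^ n)
noncomputable def B (α : ℝ) (L n m : ℕ) : ℝ := coeff m (G α L ^ n)

def NN (f : PowerSeries ℝ) : Prop := ∀ k, 0 ≤ coeff k f

theorem NN.add {f g : PowerSeries ℝ} (hf : NN f) (hg : NN g) : NN (f + g) := fun k => by
  rw [map_add]; exact add_nonneg (hf k) (hg k)
theorem NN.mul {f g : PowerSeries ℝ} (hf : NN f) (hg : NN g) : NN (f * g) := fun k => by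
  rw [PowerSeries.coeff_mul]; exact Finset.sum_nonneg fun x _ => mul_nonneg (hf _) (hg _)
theorem NN.one : NN (1 : PowerSeries ℝ) := fun k => by
  rw [PowerSeries.coeff_one]; split_ifs <;> norm_num
theorem NN.pow {f : PowerSeries ℝ} (hf : NN f) (n : ℕ) : NN (f ^ n) := by
  induction n with
  | zero => rw [pow_zero]; exact NN.one
  | succ n ih => rw [pow_succ]; exact ih.mul hf
theorem NN.nat (n : ℕ) : NN (n : PowerSeries ℝ) := by
  induction n with
  | zero => intro k; simp
  | succ n ih => rw [Nat.cast_succ]; exact ih.add NN.one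

theorem NN_F (α : ℝ) : NN (F α) := fun k => by rw [F, coeff_mk]; positivity
theorem NN_G (α : ℝ) (L : ℕ) : NN (G α L) := fun k => by
  rw [G, coeff_mk]; split_ifs <;> positivity
theorem NN_H (α : ℝ) (L : ℕ) : NN (H α L) := fun k => by
  rw [H, coeff_mk]; split_ifs <;> positivity
theorem F_eq (α : ℝ) (L : ℕ) : F α = G α L + H α L := by
  ext k; simp only [F, G, H, coeff_mk, map_add]; split_ifs <;> simp

theorem union_bound {f g h : PowerSeries ℝ} (hf : NN f) (hg : NN g) (hh : NN h)
    (e : f = g + h) (n : ℕ) : NN ((n+1 : ℕ) * (h * f ^ n) + g ^ (n+1) - f ^ (n+1)) := by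
  induction n with
  | zero => 
    have : ((0+1:ℕ) : PowerSeries ℝ) * (h * f ^ 0) + g ^ (0+1) - f ^ (0+1) = 0 := by
      rw [e]; push_cast; ring
    rw [this]; intro k; simp
  | succ n ih =>
    have : ((n+1+1:ℕ) : PowerSeries ℝ) * (h * f ^ (n+1)) + g ^ (n+1+1) - f ^ (n+1+1) =
      g * (((n+1 : ℕ) : PowerSeries ℝ) * (h * f ^ n) + g ^ (n+1) - f ^ (n+1)) + 
        ((n+1 : ℕ) : PowerSeries ℝ) * (h * (h * f ^ n)) := by
      have e' : h = f - g := by rw [e]; ring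
      rw [e']; push_cast; ring
    rw [this]
    exact (hg.mul ih).add ((NN.nat _).mul (hh.mul (hh.mul (hf.pow n))))

theorem A_le (α : ℝ) (L n m : ℕ) :
    A α (n+1) m ≤ B α L (n+1) m + (n+1) * coeff m (H α L * F α ^ n) := by
  have := union_bound (NN_F α) (NN_G α L) (NN_H α L) (F_eq α L) n m
  rw [map_sub, map_add, ← map_natCast (C : ℝ →+* PowerSeries ℝ), coeff_C_mul] at this
  push_cast at this
  simp only [A, B]; linarith

theorem step {g : PowerSeries ℝ} (hg : NN g) (n m : ℕ) (c : ℝ)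
    (h : ∀ k ≤ m, ((k:ℝ)+1) * coeff (k+1) g ≤ (1 + k * c) * coeff k g) :
    ((m:ℝ)+1) * coeff (m+1) (g ^ (n+1)) ≤ ((n:ℝ)+1 + m * c) * coeff m (g ^ (n+1)) := by
  have h1 := aux_coeff_der g n (m+1)
  have h2 := aux_coeff_der g n m
  have h3 := aux_coeff_mul g n m
  rw [Finset.sum_range_succ'] at h1
  push_cast at h1
  have h4 : ((n:ℝ)+1 + m * c) * coeff m (g ^ (n+1)) = ((n:ℝ)+1) * (
      ∑ d ∈ Finset.range (m + 1), coeff d g * coeff (m - d) (g ^ n) + 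
      (∑ d ∈ Finset.range (m + 1), (d:ℝ) * coeff d g * coeff (m - d) (g ^ n)) * c) := by
    rw [mul_add, ← h3, ← mul_assoc, ← h2]; ring
  rw [h1, h4]
  simp only [zero_mul, add_zero]
  apply mul_le_mul_of_nonneg_left _ (by positivity)
  rw [Finset.sum_mul, ← Finset.sum_add_distrib]
  apply Finset.sum_le_sum
  intro k hk
  have := mul_le_mul_of_nonneg_right (h k (by simp at hk; omega)) (hg.pow n (m-k))
  linarith

theorem fact_succ (α : ℝ) (k : ℕ) : ((k+1).factorial : ℝ)^α = ((k:ℝ)+1)^α * (k.factorial:ℝ)^α := by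
  rw [Nat.factorial_succ]; push_cast
  rw [Real.mul_rpow (by positivity) (by positivity)]

theorem pow_aux (α : ℝ) (h0 : 0 < α) (h1 : α < 1) (k : ℕ) (M : ℝ) (hM : (k:ℝ) + 1 ≤ M) :
    ((k:ℝ)+1) * ((k:ℝ)+1)^α ≤ 1 + k * (M^α + 1) := by
  have e1 : ((k:ℝ)+1)^α ≤ M^α := Real.rpow_le_rpow (by positivity) hM h0.le
  have e2 : ((k:ℝ)+1)^α ≤ (k:ℝ)+1 := by
    have := Real.rpow_le_rpow_of_exponent_le (x := (k:ℝ)+1) (by simp) h1.le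
    simpa using this
  nlinarith [mul_le_mul_of_nonneg_left e1 (Nat.cast_nonneg (α := ℝ) k)]

theorem A_step (α : ℝ) (h0 : 0 < α) (h1 : α < 1) (n m : ℕ) :
    ((m:ℝ)+1) * A α (n+1) (m+1) ≤ ((n:ℝ)+1 + m * (((m:ℝ)+1)^α+1)) * A α (n+1) m := by
  apply step (NN_F α)
  intro k hk
  simp only [F, coeff_mk]
  rw [fact_succ, ← mul_assoc]
  apply mul_le_mul_of_nonneg_right _ (by positivity)
  apply pow_aux α h0 h1
  have : (k:ℝ) ≤ m := by exact_mod_cast hk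
  linarith

theorem B_step (α : ℝ) (h0 : 0 < α) (h1 : α < 1) (L n m : ℕ) :
    ((m:ℝ)+1) * B α L (n+1) (m+1) ≤
      ((n:ℝ)+1 + m * (((min (m+1) L : ℕ):ℝ)^α+1)) * B α L (n+1) m := by
  apply step (NN_G α L)
  intro k hk
  simp only [G, coeff_mk]
  by_cases hkL : k + 1 ≤ L
  · rw [if_pos hkL, if_pos (by omega), fact_succ, ← mul_assoc]
    apply mul_le_mul_of_nonneg_right _ (by positivity)
    apply pow_aux α h0 h1
    have : k + 1 ≤ min (m+1) L := by omega
    exact_mod_cast this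
  · rw [if_neg hkL, mul_zero]
    split_ifs <;> positivity

theorem B_prod (α : ℝ) (h0 : 0 < α) (h1 : α < 1) (L n m : ℕ) :
    B α L (n+1) m ≤ ∏ l ∈ Finset.range m, 
      (((min (l+1) L : ℕ):ℝ)^α + 1 + ((n+1:ℕ):ℝ) / ((l:ℝ)+1)) := by
  induction m with
  | zero => simp [B, G]
  | succ m ih =>
    rw [Finset.prod_range_succ]
    have h := B_step α h0 h1 L n m
    have hB : 0 ≤ B α L (n+1) m := (NN_G α L).pow _ _
    have hm : (0:ℝ) < m + 1 := by positivity
    have : B α L (n+1) (m+1) ≤ B α L (n+1) m * 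
        (((min (m+1) L : ℕ):ℝ)^α + 1 + ((n+1:ℕ):ℝ) / ((m:ℝ)+1)) := by
      rw [← mul_le_mul_iff_right₀ hm]
      refine h.trans ?_
      have : ((m:ℝ)+1) * (B α L (n+1) m * 
        (((min (m+1) L : ℕ):ℝ)^α + 1 + ((n+1:ℕ):ℝ) / ((m:ℝ)+1))) = 
        ((n:ℝ)+1 + (m+1) * (((min (m+1) L : ℕ):ℝ)^α+1)) * B α L (n+1) m := by
        push_cast; field_simp; ring
      rw [this]
      apply mul_le_mul_of_nonneg_right _ hB
      have : 0 ≤ ((min (m+1) L : ℕ):ℝ)^α+1 := by positivity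
      linarith
    refine this.trans ?_
    apply mul_le_mul_of_nonneg_right ih (by positivity)

theorem A_ge (α : ℝ) (n m : ℕ) : ((m.factorial : ℝ))^α ≤ A α (n+1) m := by
  rw [A, aux_coeff_mul]
  have : ((m.factorial : ℝ))^α = coeff m (F α) * coeff (m-m) (F α ^ n) := by
    simp [F]
  rw [this]
  apply Finset.single_le_sum (f := fun d => coeff d (F α) * coeff (m-d) (F α ^ n))
  · intro d hd; exact mul_nonneg (NN_F α d) ((NN_F α).pow n _)
  · simp

theorem A_pos (α : ℝ) (n m : ℕ) : 0 < A α (n+1) m := lt_of_lt_of_le (by positivity) (A_ge α n m)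

theorem sum_rpow (s : ℝ) (hs0 : 0 < s) (hs : s < 1) (m : ℕ) :
    ∑ l ∈ Finset.range m, ((l:ℝ)+1)^(-s) ≤ (m:ℝ)^(1-s) / (1-s) := by
  induction m with
  | zero => simp; positivity
  | succ m ih =>
    rw [Finset.sum_range_succ]
    have h1s : 0 < 1 - s := by linarith
    have hm : (0:ℝ) < m + 1 := by positivity
    have h := rpow_one_add_le_one_add_mul_self (s := -(1/((m:ℝ)+1))) (p := 1-s)
      (by rw [neg_le_neg_iff, div_le_one hm]; simp) h1s.le (by linarith)
    have e : (1 + -(1/((m:ℝ)+1))) = m / (m+1) := by field_simp; ring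
    rw [e, Real.div_rpow (by positivity) hm.le, div_le_iff₀ (by positivity)] at h
    have e2 : ((m:ℝ)+1)^(-s) = ((m:ℝ)+1)^(1-s) / (m+1) := by
      rw [← Real.rpow_sub_one hm.ne']; congr 1; ring
    rw [e2]
    push_cast
    have : (m:ℝ)^(1-s)/(1-s) ≤ ((1 + (1-s) * -(1/((m:ℝ)+1))) * ((m:ℝ)+1)^(1-s))/(1-s) := by
      gcongr
    have e3 : ((1 + (1-s) * -(1/((m:ℝ)+1))) * ((m:ℝ)+1)^(1-s))/(1-s) = 
      ((m:ℝ)+1)^(1-s)/(1-s) - ((m:ℝ)+1)^(1-s) / (m+1) := by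
      field_simp; ring
    linarith

theorem sum_trunc (L D : ℕ) : D^2 ≤ 2 * ∑ l ∈ Finset.range (L + D), (l+1-L) := by
  induction D with
  | zero => simp
  | succ D ih =>
    rw [← add_assoc, Finset.sum_range_succ]
    have : L + D + 1 - L = D + 1 := by omega
    rw [this]; nlinarith

theorem factor_bound (α : ℝ) (h0 : 0 < α) (h1 : α < 1) (L n m c l : ℕ) (hL : m ≤ 2 * L)
    (hLm : L ≤ m) (hn : n ≤ m + c) (hl : l < m) :
    ((min (l+1) L : ℕ):ℝ)^α + 1 + (n:ℝ) / ((l:ℝ)+1) ≤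
      ((l:ℝ)+1)^α * Real.exp (-(α / m) * ((l+1-L : ℕ):ℝ)) *
        Real.exp (2 * (√(2 * (2*m+c)) * ((l:ℝ)+1)^(-((1+α)/2)))) := by
  have hl1 : (0:ℝ) < l + 1 := by positivity
  have hm0 : (0:ℝ) < m := by exact_mod_cast (by omega : 0 < m)
  set M : ℕ := min (l+1) L with hM
  have hMpos : (0:ℝ) < M := by exact_mod_cast (by omega : 0 < M)
  have hM2 : (l:ℝ)+1 ≤ 2 * M := by exact_mod_cast (by omega : l + 1 ≤ 2 * M)
  -- first
  have a1 : (M:ℝ)^α ≤ ((l:ℝ)+1)^α * Real.exp (-(α / m) * ((l+1-L : ℕ):ℝ)) := by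
    have : (M:ℝ) ≤ ((l:ℝ)+1) * Real.exp (-(1 / m) * ((l+1-L : ℕ):ℝ)) := by
      have e := Real.add_one_le_exp (-(1 / (m:ℝ)) * ((l+1-L : ℕ):ℝ))
      refine le_trans ?_ (mul_le_mul_of_nonneg_left e hl1.le)
      have h3 : ((l+1-L : ℕ):ℝ) = (l:ℝ)+1 - M := by
        have : l + 1 = (l+1-L) + M := by omega
        have : (l:ℝ)+1 = ((l+1-L:ℕ):ℝ) + M := by exact_mod_cast this
        linarith
      have h4 : (l:ℝ)+1 ≤ m := by exact_mod_cast hl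
      have h5 : (0:ℝ) ≤ ((l+1-L : ℕ):ℝ) := by positivity
      have h6 : ((l:ℝ)+1) / m ≤ 1 := by rw [div_le_one hm0]; exact h4
      have h7 : ((l:ℝ)+1) * (-(1/(m:ℝ)) * ((l+1-L : ℕ):ℝ) + 1) =
        (l:ℝ)+1 - ((l:ℝ)+1) / m * ((l+1-L : ℕ):ℝ) := by ring
      rw [h7]
      nlinarith [mul_le_mul_of_nonneg_right h6 h5]
    have := Real.rpow_le_rpow hMpos.le this h0.le
    rw [Real.mul_rpow hl1.le (Real.exp_pos _).le, ← Real.exp_mul] at this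
    refine this.trans_eq ?_
    congr 2; ring
  set K : ℝ := 2 * (2*m+c) with hK
  have hK0 : 0 ≤ K := by positivity
  set y : ℝ := √K * ((l:ℝ)+1)^(-((1+α)/2)) with hy
  have hy0 : 0 ≤ y := by positivity
  have hy2 : y^2 = K * ((l:ℝ)+1)^(-(1+α)) := by
    rw [hy, mul_pow, Real.sq_sqrt hK0, ← Real.rpow_natCast, ← Real.rpow_mul hl1.le]
    congr 2; push_cast; ring
  have a2 : 1 + y^2 ≤ Real.exp (2*y) := by
    have := Real.add_one_le_exp y
    have h2 : Real.exp (2*y) = Real.exp y ^ 2 := by rw [← Real.exp_nat_mul]; norm_num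
    rw [h2]; nlinarith
  have a3 : 1 + (n:ℝ)/((l:ℝ)+1) ≤ (M:ℝ)^α * y^2 := by
    have b1 : (((l:ℝ)+1)/2)^α ≤ (M:ℝ)^α :=
      Real.rpow_le_rpow (by positivity) (by linarith) h0.le
    rw [Real.div_rpow hl1.le (by norm_num)] at b1
    have b2 : (2:ℝ)^α ≤ 2 := by
      have := Real.rpow_le_rpow_of_exponent_le (x := (2:ℝ)) (by simp) h1.le
      simpa using this
    have b3 : ((l:ℝ)+1)^α / 2 ≤ (M:ℝ)^α := by
      refine le_trans ?_ b1
      gcongr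
    have b4 : 1 + (n:ℝ)/((l:ℝ)+1) ≤ (2*m+c)/((l:ℝ)+1) := by
      rw [one_add_div hl1.ne']
      have h4 : (l:ℝ)+1 ≤ m := by exact_mod_cast hl
      have h5 : (n:ℝ) ≤ m + c := by exact_mod_cast hn
      exact div_le_div_of_nonneg_right (by linarith) hl1.le
    refine b4.trans ?_
    refine le_trans (le_of_eq ?_) (mul_le_mul_of_nonneg_right b3 (by positivity))
    rw [hy2, hK, neg_add, Real.rpow_add hl1, Real.rpow_neg hl1.le, Real.rpow_neg hl1.le, Real.rpow_one]
    field_simp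
  calc (M:ℝ)^α + 1 + (n:ℝ) / ((l:ℝ)+1) ≤ (M:ℝ)^α * (1 + y^2) := by linarith
    _ ≤ _ := mul_le_mul a1 a2 (by positivity) (by positivity)

theorem B_bound (α : ℝ) (h0 : 0 < α) (h1 : α < 1) (L n m c : ℕ) (hL : m ≤ 2 * L)
    (hLm : L ≤ m) (hn : n + 1 ≤ m + c) :
    B α L (n+1) m ≤ (m.factorial : ℝ)^α * Real.exp (
      2 * (√(2 * (2*m+c)) * ((m:ℝ)^((1-α)/2) / ((1-α)/2))) - α / m * (((m-L:ℕ):ℝ)^2 / 2)) := by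
  refine (B_prod α h0 h1 L n m).trans ?_
  have e := Finset.prod_le_prod (s := Finset.range m)
    (f := fun l => (((min (l+1) L : ℕ):ℝ)^α + 1 + ((n+1:ℕ):ℝ) / ((l:ℝ)+1))) 
    (g := fun l : ℕ => ((l:ℝ)+1)^α * Real.exp (-(α / m) * ((l+1-L : ℕ):ℝ)) *
        Real.exp (2 * (√(2 * (2*m+c)) * ((l:ℝ)+1)^(-((1+α)/2)))))
    (fun l hl => by positivity)
    (fun l hl => factor_bound α h0 h1 L (n+1) m c l hL hLm hn (by simpa using hl))
  refine e.trans ?_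
  rw [Finset.prod_mul_distrib, Finset.prod_mul_distrib, ← Real.exp_sum, ← Real.exp_sum]
  have e1 : ∏ l ∈ Finset.range m, ((l:ℝ)+1)^α = (m.factorial:ℝ)^α := by
    clear e hL hLm hn
    induction m with
    | zero => simp
    | succ m ih => rw [Finset.prod_range_succ, ih, fact_succ, mul_comm]
  rw [e1, mul_assoc, ← Real.exp_add]
  apply mul_le_mul_of_nonneg_left _ (by positivity)
  apply Real.exp_le_exp.2
  rw [← Finset.mul_sum, ← Finset.mul_sum, ← Finset.mul_sum]
  have f1 := sum_rpow ((1+α)/2) (by linarith) (by linarith) m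
  have f1' : (1:ℝ) - (1+α)/2 = (1-α)/2 := by ring
  rw [f1'] at f1
  have f2 : ((m-L:ℕ):ℝ)^2/2 ≤ ∑ l ∈ Finset.range m, ((l+1-L:ℕ):ℝ) := by
    have := sum_trunc L (m-L)
    rw [Nat.add_sub_cancel' hLm] at this
    have : ((m-L:ℕ):ℝ)^2 ≤ 2 * ∑ l ∈ Finset.range m, ((l+1-L:ℕ):ℝ) := by exact_mod_cast this
    linarith
  have f3 : 0 ≤ α / m := by positivity
  have g1 := mul_le_mul_of_nonneg_left f1 (Real.sqrt_nonneg (2 * (2*(m:ℝ)+c)))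
  have g2 := mul_le_mul_of_nonneg_left f2 f3
  linarith

end SG

namespace SG
open PowerSeries Topology

noncomputable def E (α : ℝ) (c q m : ℕ) : ℝ := Real.exp (
      2 * (√(2 * (2*m+c)) * ((m:ℝ)^((1-α)/2) / ((1-α)/2))) - α / m * (((m/q:ℕ):ℝ)^2 / 2))

theorem E_tendsto (α : ℝ) (h0 : 0 < α) (h1 : α < 1) (c q : ℕ) (hq : 2 ≤ q) :
    Tendsto (E α c q) atTop (𝓝 0) := by
  have hq0 : (0:ℝ) < q := by exact_mod_cast (by omega : 0 < q)
  set C : ℝ := 2 * √(2*(2+c)) / ((1-α)/2) with hC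
  set κ : ℝ := α / (8 * q^2) with hκ
  have hκ0 : 0 < κ := by positivity
  have h1a : 0 < (1-α)/2 := by linarith
  have lim : Tendsto (fun m : ℕ => (m:ℝ) * (C * (m:ℝ)^(-(α/2)) - κ)) atTop atBot := by
    have l1 : Tendsto (fun m : ℕ => (m:ℝ)^(-(α/2))) atTop (𝓝 0) :=
      (tendsto_rpow_neg_atTop (by linarith)).comp tendsto_natCast_atTop_atTop
    have l2 : Tendsto (fun m : ℕ => (C * (m:ℝ)^(-(α/2)) - κ)) atTop (𝓝 (-κ)) := by
      have := (l1.const_mul C).sub_const κ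
      simpa using this
    exact tendsto_natCast_atTop_atTop.atTop_mul_neg (by linarith) l2
  have lim2 := Real.tendsto_exp_atBot.comp lim
  refine squeeze_zero' (Eventually.of_forall fun m => (Real.exp_pos _).le) ?_ lim2
  filter_upwards [eventually_ge_atTop q] with m hm
  have hmq : q ≤ m := hm
  have hm1 : (1:ℝ) ≤ m := by exact_mod_cast (by omega : 1 ≤ m)
  have hm0 : (0:ℝ) < m := by linarith
  apply Real.exp_le_exp.2
  have a1 : √(2 * (2*m+c)) ≤ √(2*(2+c)) * (m:ℝ)^(1/2:ℝ) := by
    rw [← Real.sqrt_eq_rpow, ← Real.sqrt_mul (by positivity)]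
    apply Real.sqrt_le_sqrt
    have : (0:ℝ) ≤ c := by positivity
    nlinarith
  have a2 : (m:ℝ)/(2*q) ≤ ((m/q:ℕ):ℝ) := by
    have h1 : m < q * (m/q) + q := by
      have := Nat.div_add_mod m q
      have := Nat.mod_lt m (show q > 0 by omega)
      omega
    have h2 : 1 ≤ m/q := (Nat.one_le_div_iff (by omega)).2 hmq
    have h3 : m ≤ 2 * q * (m/q) := by nlinarith
    rw [div_le_iff₀ (by positivity)]
    have : (m:ℝ) ≤ 2 * q * ((m/q:ℕ):ℝ) := by exact_mod_cast h3
    linarith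
  have a3 : κ * m ≤ α / m * (((m/q:ℕ):ℝ)^2 / 2) := by
    have : ((m:ℝ)/(2*q))^2 ≤ ((m/q:ℕ):ℝ)^2 := by gcongr
    calc κ * m = α / m * (((m:ℝ)/(2*q))^2/2) := by rw [hκ]; field_simp; ring
      _ ≤ _ := by gcongr
  have a4 : 2 * (√(2 * (2*m+c)) * ((m:ℝ)^((1-α)/2) / ((1-α)/2))) ≤
      m * (C * (m:ℝ)^(-(α/2))) := by
    have : (m:ℝ) * (C * (m:ℝ)^(-(α/2))) = 2 * ((√(2*(2+c)) * (m:ℝ)^(1/2:ℝ)) *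
        ((m:ℝ)^((1-α)/2) / ((1-α)/2))) := by
      have e : (m:ℝ)^(1/2:ℝ) * (m:ℝ)^((1-α)/2) = m * (m:ℝ)^(-(α/2)) := by
        rw [← Real.rpow_add hm0]
        nth_rewrite 2 [← Real.rpow_one (m:ℝ)]
        rw [← Real.rpow_add hm0]; congr 1; ring
      rw [hC]
      linear_combination (-(2 * √(2*(2+c)) / ((1-α)/2))) * e
    rw [this]
    gcongr
  show _ ≤ (m:ℝ) * (C * (m:ℝ)^(-(α/2)) - κ)
  rw [mul_sub]
  linarith

theorem B_le (α : ℝ) (h0 : 0 < α) (h1 : α < 1) (n m c q : ℕ) (hq : 2 ≤ q) (hn : n + 1 ≤ m + c) :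
    B α (m - m/q) (n+1) m ≤ E α c q m * A α (n+1) m := by
  have hd : m/q ≤ m/2 := Nat.div_le_div_left hq (by norm_num)
  generalize hx : m/q = x at hd
  have := B_bound α h0 h1 (m - m/q) n m c (by omega) (by omega) hn
  rw [show m - (m - m/q) = m/q by omega, hx] at this
  rw [E, hx]
  refine this.trans ?_
  rw [mul_comm]
  exact mul_le_mul_of_nonneg_left (A_ge α n m) (Real.exp_pos _).le

theorem coeff_H (α : ℝ) (L n m : ℕ) : coeff m (H α L * F α ^ n) =
    ∑ d ∈ Finset.range (m+1), coeff d (H α L) * A α n (m-d) := by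
  rw [PowerSeries.coeff_mul, Finset.Nat.sum_antidiagonal_eq_sum_range_succ
    (fun a b => coeff a (H α L) * coeff b (F α ^n))]
  rfl

theorem A_nonneg (α : ℝ) (n m : ℕ) : 0 ≤ A α n m := (NN_F α).pow n m

theorem A_lower (α : ℝ) (h0 : 0 < α) (L n m : ℕ) :
    (L:ℝ) * (L:ℝ)^α * (A α (n+1) m - B α L (n+1) m) ≤ ((m:ℝ)+1) * A α (n+1) (m+1) := by
  have h1 := aux_coeff_der (F α) n (m+1)
  rw [Finset.sum_range_succ'] at h1
  push_cast at h1
  have h2 := A_le α L n m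
  rw [coeff_H] at h2
  rw [A.eq_1 α (n+1) (m+1), h1]
  simp only [zero_mul, add_zero]
  have h3 : (L:ℝ) * (L:ℝ)^α * (A α (n+1) m - B α L (n+1) m) ≤ 
      (L:ℝ) * (L:ℝ)^α * ((n+1) * ∑ d ∈ Finset.range (m+1), coeff d (H α L) * A α n (m-d)) := by
    apply mul_le_mul_of_nonneg_left _ (by positivity)
    linarith
  refine h3.trans ?_
  rw [mul_left_comm, Finset.mul_sum]
  apply mul_le_mul_of_nonneg_left _ (by positivity)
  apply Finset.sum_le_sum
  intro d hd
  rw [← mul_assoc]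
  apply mul_le_mul_of_nonneg_right _ (A_nonneg α n (m-d))
  simp only [H, F, coeff_mk]
  split_ifs with h
  · rw [mul_zero]; positivity
  · rw [fact_succ, ← mul_assoc]
    have : (L:ℝ) ≤ (d:ℝ)+1 := by exact_mod_cast (by omega : L ≤ d + 1)
    gcongr

theorem p0_lower (α : ℝ) (L n m : ℕ) (hL : 1 ≤ L) :
    ((n:ℝ)+1) * (A α (n+1) m - A α n m) ≤
      ((m:ℝ) - L + 1) * A α (n+1) m + L * B α L (n+1) m := by
  have h1 := aux_coeff_der (F α) n m
  have h2 := A_le α L n m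
  have h3 := aux_coeff_mul (F α) n m
  rw [coeff_H] at h2
  set U := ∑ d ∈ Finset.range (m+1), coeff d (H α L) * A α n (m-d) with hU
  have h4 : A α (n+1) m - A α n m ≤ 
      ∑ d ∈ Finset.range (m+1), (d:ℝ) * coeff d (F α) * coeff (m-d) (F α ^ n) - (L-1) * U := by
    rw [A, h3, hU, Finset.mul_sum, ← Finset.sum_sub_distrib, Finset.sum_range_succ',
      Finset.sum_range_succ']
    have e1 : coeff 0 (F α) * coeff (m-0) (F α ^ n) = A α n m := by simp [F, A]
    have e2 : coeff 0 (H α L) = 0 := by simp [H]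
    rw [e1, e2]
    simp only [Nat.cast_zero, zero_mul, mul_zero, sub_zero, add_zero]
    rw [add_sub_cancel_right]
    apply Finset.sum_le_sum
    intro d hd
    have hA : 0 ≤ A α n (m - (d+1)) := A_nonneg _ _ _
    change coeff (d+1) (F α) * A α n (m - (d+1)) ≤ 
      ((d+1:ℕ):ℝ) * coeff (d+1) (F α) * A α n (m - (d+1)) - 
      (L-1) * (coeff (d+1) (H α L) * A α n (m - (d+1)))
    rw [← mul_assoc, ← sub_mul]
    apply mul_le_mul_of_nonneg_right _ hA
    simp only [F, H, coeff_mk]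
    have hw : 0 ≤ ((d+1).factorial:ℝ)^α := by positivity
    have hd0 : (0:ℝ) ≤ d := by positivity
    split_ifs with h
    · push_cast; nlinarith
    · have : (L:ℝ) ≤ d + 1 := by exact_mod_cast (by omega : L ≤ d + 1)
      push_cast
      nlinarith
  have hn : (0:ℝ) < n + 1 := by positivity
  have h5 := mul_le_mul_of_nonneg_left h4 hn.le
  rw [mul_sub ((n:ℝ)+1) (Finset.sum _ _), ← h1] at h5
  have hL1 : (0:ℝ) ≤ (L:ℝ) - 1 := by
    have : (1:ℝ) ≤ L := by exact_mod_cast hL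
    linarith
  have h6 := mul_le_mul_of_nonneg_left h2 hL1
  have hB : 0 ≤ B α L (n+1) m := (NN_G α L).pow _ _
  simp only [← A.eq_1] at h5 ⊢
  nlinarith

theorem A_mono (α : ℝ) (n m : ℕ) : A α n m ≤ A α (n+1) m := by
  have h3 := aux_coeff_mul (F α) n m
  rw [A, A, h3, Finset.sum_range_succ']
  have e1 : coeff 0 (F α) * coeff (m-0) (F α ^ n) = A α n m := by simp [F, A]
  rw [e1, A]
  have : 0 ≤ ∑ k ∈ Finset.range m, coeff (k+1) (F α) * coeff (m-(k+1)) (F α ^ n) :=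
    Finset.sum_nonneg fun d hd => mul_nonneg (NN_F _ _) ((NN_F α).pow _ _)
  linarith

theorem squeeze_gen (u U : ℕ → ℝ) (v : ℕ → ℕ → ℝ) (a : ℕ → ℝ)
    (h1 : ∀ᶠ m in atTop, u m ≤ U m) (h2 : Tendsto U atTop (𝓝 1))
    (h3 : ∀ q ≥ 2, ∀ᶠ m in atTop, v q m ≤ u m) (h4 : ∀ q ≥ 2, Tendsto (v q) atTop (𝓝 (a q)))
    (h5 : Tendsto a atTop (𝓝 1)) : Tendsto u atTop (𝓝 1) := by
  rw [tendsto_order]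
  constructor
  · intro b hb
    obtain ⟨q, hq1, hq2⟩ := (((tendsto_order.1 h5).1 b hb).and (eventually_ge_atTop 2)).exists
    filter_upwards [(tendsto_order.1 (h4 q hq2)).1 b hq1, h3 q hq2] with m e1 e2
    linarith
  · intro b hb
    filter_upwards [(tendsto_order.1 h2).2 b hb, h1] with m e1 e2
    linarith

theorem L_bound (m q : ℕ) (_hq : 2 ≤ q) : (1 - 1/(q:ℝ)) * m ≤ ((m - m/q : ℕ):ℝ) := by
  have : m/q ≤ m := Nat.div_le_self _ _
  rw [Nat.cast_sub this]
  have := Nat.cast_div_le (α := ℝ) (m := m) (n := q)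
  have e : (1 - 1/(q:ℝ)) * m = m - m / q := by ring
  linarith

theorem inv_lim : Tendsto (fun q : ℕ => 1 - 1/(q:ℝ)) atTop (𝓝 1) := by
  have := (tendsto_const_nhds (x := (1:ℝ))).sub (tendsto_one_div_atTop_nhds_zero_nat (𝕜 := ℝ))
  simpa using this

theorem p0_lim (α : ℝ) (h0 : 0 < α) (h1 : α < 1) (c : ℕ) :
    Tendsto (fun m : ℕ => A α (m+c) m / A α (m+c+1) m) atTop (𝓝 1) := by
  apply squeeze_gen _ (fun _ => 1) (fun q m => 1 - 1/(q:ℝ) - 1/(m:ℝ) - E α (c+1) q m)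
    (fun q => 1 - 1/(q:ℝ)) 
  · filter_upwards with m
    rw [div_le_one (A_pos _ _ _)]
    exact A_mono _ _ _
  · exact tendsto_const_nhds
  · intro q hq
    filter_upwards [eventually_ge_atTop 2] with m hm
    have hA := A_pos α (m+c) m
    rw [le_div_iff₀ hA]
    have hm0 : (0:ℝ) < m := by exact_mod_cast (by omega : 0 < m)
    have hd : m/q ≤ m/2 := Nat.div_le_div_left hq (by norm_num)
    have b1 := p0_lower α (m - m/q) (m+c) m (by omega)
    have b2 := B_le α h0 h1 (m+c) m (c+1) q hq (by omega)
    have b3 := L_bound m q hq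
    have b4 : ((m - m/q : ℕ):ℝ) ≤ m := by exact_mod_cast Nat.sub_le _ _
    have hB : 0 ≤ B α (m - m/q) (m+c+1) m := (NN_G α _).pow _ _
    set L : ℝ := ((m - m/q : ℕ):ℝ)
    set a := A α (m+c+1) m
    set a' := A α (m+c) m
    set b := B α (m - m/q) (m+c+1) m
    have haa : 0 ≤ a - a' := sub_nonneg.2 (A_mono _ _ _)
    have d1 : (m:ℝ) * (a - a') ≤ (((m + c : ℕ):ℝ)+1) * (a - a') := by
      apply mul_le_mul_of_nonneg_right _ haa
      push_cast
      have : (0:ℝ) ≤ c := by positivity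
      linarith
    have d2 : L * b ≤ m * (E α (c+1) q m * a) := by
      calc L * b ≤ m * b := mul_le_mul_of_nonneg_right b4 hB
        _ ≤ _ := mul_le_mul_of_nonneg_left b2 hm0.le
    have d3 : ((m:ℝ) - L + 1) * a ≤ (m / q + 1) * a := by
      apply mul_le_mul_of_nonneg_right _ hA.le
      have e : (1 - 1/(q:ℝ)) * m = m - m / q := by ring
      linarith
    have d4 : (m:ℝ) * (a - a') ≤ m * ((1/(q:ℝ) + 1/(m:ℝ) + E α (c+1) q m) * a) := by
      have : (m:ℝ) * ((1/(q:ℝ) + 1/(m:ℝ) + E α (c+1) q m) * a) = 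
        (m / q + 1) * a + m * (E α (c+1) q m * a) := by field_simp
      linarith
    have d5 := le_of_mul_le_mul_left d4 hm0
    linarith
  · intro q hq
    have := ((tendsto_const_nhds (x := 1 - 1/(q:ℝ))).sub
      (tendsto_one_div_atTop_nhds_zero_nat (𝕜 := ℝ))).sub (E_tendsto α h0 h1 (c+1) q hq)
    simpa using this
  · exact inv_lim

theorem frac_lim : Tendsto (fun m : ℕ => (m:ℝ) / (m+1)) atTop (𝓝 1) :=
  tendsto_natCast_div_add_atTop (𝕜 := ℝ) 1

theorem r_lim (α : ℝ) (h0 : 0 < α) (h1 : α < 1) (c : ℕ) :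
    Tendsto (fun m : ℕ => A α (m+c+1) (m+1) / (A α (m+c+1) m * (m:ℝ)^α)) atTop (𝓝 1) := by
  have hinv : Tendsto (fun m : ℕ => ((m:ℝ)^α)⁻¹) atTop (𝓝 0) :=
    ((tendsto_rpow_atTop h0).comp tendsto_natCast_atTop_atTop).inv_tendsto_atTop
  apply squeeze_gen _ (fun m => (((m:ℝ)+1)/m)^α + (c+2) * ((m:ℝ)^α)⁻¹)
    (fun q m => (1 - 1/(q:ℝ))^2 * ((m:ℝ) / (m+1)) * (1 - E α (c+1) q m))
    (fun q => (1 - 1/(q:ℝ))^2) 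
  · filter_upwards [eventually_ge_atTop 1] with m hm
    have hA := A_pos α (m+c) m
    have hm0 : (0:ℝ) < m := by exact_mod_cast (by omega : 0 < m)
    have hma : (0:ℝ) < (m:ℝ)^α := by positivity
    rw [div_le_iff₀ (by positivity)]
    have s := A_step α h0 h1 (m+c) m
    rw [Real.div_rpow (by positivity) hm0.le]
    have e : (((m:ℝ)+1)^α/(m:ℝ)^α + (c+2) * ((m:ℝ)^α)⁻¹) * (A α (m+c+1) m * (m:ℝ)^α) =
      (((m:ℝ)+1)^α + (c+2)) * A α (m+c+1) m := by field_simp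
    rw [e]
    have hp : (0:ℝ) < (m:ℝ)+1 := by positivity
    rw [← mul_le_mul_iff_right₀ hp]
    refine s.trans ?_
    rw [← mul_assoc]
    apply mul_le_mul_of_nonneg_right _ hA.le
    push_cast
    have : 0 ≤ ((m:ℝ)+1)^α := by positivity
    have : (0:ℝ) ≤ c := by positivity
    nlinarith
  · have l1 : Tendsto (fun m : ℕ => ((m:ℝ)+1)/m) atTop (𝓝 1) := by
      have := frac_lim.inv₀ one_ne_zero
      simpa using this
    have l2 := l1.rpow_const (p := α) (Or.inl one_ne_zero)
    have := l2.add (hinv.const_mul ((c:ℝ)+2))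
    simpa using this
  · intro q hq
    filter_upwards [eventually_ge_atTop 2, (tendsto_order.1 (E_tendsto α h0 h1 (c+1) q hq)).2 1 one_pos]
      with m hm hE
    have hA := A_pos α (m+c) m
    have hm0 : (0:ℝ) < m := by exact_mod_cast (by omega : 0 < m)
    have hma : (0:ℝ) < (m:ℝ)^α := by positivity
    have hq0 : (1:ℝ) < q := by exact_mod_cast (by omega : 1 < q)
    rw [le_div_iff₀ (by positivity)]
    have b1 := A_lower α h0 (m - m/q) (m+c) m
    have b2 := B_le α h0 h1 (m+c) m (c+1) q hq (by omega)
    have b3 := L_bound m q hq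
    set L : ℝ := ((m - m/q : ℕ):ℝ)
    set t : ℝ := 1 - 1/(q:ℝ) with ht
    have ht0 : 0 < t := by
      rw [ht, sub_pos, div_lt_one (by linarith)]; exact hq0
    have ht1 : t ≤ 1 := by
      rw [ht]; have : 0 < 1/(q:ℝ) := by positivity
      linarith
    have c1 : t * (m:ℝ)^α ≤ L^α := by
      calc t * (m:ℝ)^α ≤ t^α * (m:ℝ)^α := by
            gcongr
            have := Real.rpow_le_rpow_of_exponent_ge ht0 ht1 h1.le
            simpa using this
        _ = (t*m)^α := by rw [Real.mul_rpow ht0.le hm0.le]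
        _ ≤ L^α := Real.rpow_le_rpow (by positivity) b3 h0.le
    have c2 : (t * m) * (t * (m:ℝ)^α) * ((1 - E α (c+1) q m) * A α (m+c+1) m) ≤ 
        L * L^α * (A α (m+c+1) m - B α (m - m/q) (m+c+1) m) := by
      have : 0 ≤ 1 - E α (c+1) q m := by linarith
      gcongr
      linarith
    have hp : (0:ℝ) < (m:ℝ)+1 := by positivity
    rw [← mul_le_mul_iff_right₀ hp]
    refine le_trans (le_of_eq ?_) (c2.trans b1)
    field_simp
  · intro q hq
    have := (frac_lim.const_mul ((1 - 1/(q:ℝ))^2)).mul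
      ((tendsto_const_nhds (x := (1:ℝ))).sub (E_tendsto α h0 h1 (c+1) q hq))
    simpa using this
  · simpa using inv_lim.pow 2

theorem A_pos' (α : ℝ) (n m : ℕ) (hn : 0 < n) : 0 < A α n m := by
  obtain ⟨k, rfl⟩ := Nat.exists_eq_succ_of_ne_zero hn.ne'
  exact A_pos α k m

theorem ratio_lim (i : ℕ) (s : ℝ) : Tendsto (fun m : ℕ => (((m+i:ℕ):ℝ)/m)^s) atTop (𝓝 1) := by
  have : Tendsto (fun m : ℕ => (((m+i:ℕ):ℝ)/m)) atTop (𝓝 1) := by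
    have := (tendsto_natCast_div_add_atTop (𝕜 := ℝ) (i:ℝ)).inv₀ one_ne_zero
    simpa using this
  simpa using this.rpow_const (p := s) (Or.inl one_ne_zero)

theorem rs_lim (α : ℝ) (h0 : 0 < α) (h1 : α < 1) (i c : ℕ) :
    Tendsto (fun m : ℕ => A α (m+i+c) (m+i) / (A α (m+i+c) m * (m:ℝ)^((i:ℝ)*α)))
      atTop (𝓝 1) := by
  induction i generalizing c with
  | zero =>
    refine tendsto_const_nhds.congr' ?_
    filter_upwards [eventually_ge_atTop 1] with m hm
    have := (A_pos' α (m+c) m (by omega)).ne'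
    simp [this]
  | succ i ih =>
    have l1 := ih (c+1)
    have l2 := (r_lim α h0 h1 c).comp (tendsto_add_atTop_nat i)
    have l3 := ratio_lim i α
    have := (l1.mul l2).mul l3
    simp only [mul_one] at this
    refine this.congr' ?_
    filter_upwards [eventually_ge_atTop 1] with m hm
    have hm0 : (0:ℝ) < m := by exact_mod_cast (by omega : 0 < m)
    simp only [Function.comp]
    rw [show m + i + (c+1) = m + i + c + 1 by ring, show m + (i+1) + c = m + i + c + 1 by ring,
      show m + (i+1) = m+i+1 by ring]
    have p1 := (A_pos α (m+i+c) m)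
    have p2 := (A_pos α (m+i+c) (m+i))
    have p3 : (0:ℝ) < ((m+i:ℕ):ℝ) := by exact_mod_cast (by omega : 0 < m + i)
    have p4 : (0:ℝ) < ((m+i:ℕ):ℝ)^α := by positivity
    have p5 : (0:ℝ) < (m:ℝ)^α := by positivity
    rw [Real.div_rpow p3.le hm0.le]
    have e : (m:ℝ)^(((i+1:ℕ):ℝ)*α) = (m:ℝ)^((i:ℝ)*α) * (m:ℝ)^α := by
      rw [← Real.rpow_add hm0]; congr 1; push_cast; ring
    rw [e]
    field_simp

theorem Q_lim (α : ℝ) (h0 : 0 < α) (h1 : α < 1) (i c k : ℕ) :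
    Tendsto (fun m : ℕ => A α (m+i+c) m * ((m+k:ℕ):ℝ)^((i:ℝ)*α) / A α (m+i+c+1) (m+i))
      atTop (𝓝 1) := by
  have l1 := (rs_lim α h0 h1 i c).inv₀ one_ne_zero
  have l2 := (p0_lim α h0 h1 c).comp (tendsto_add_atTop_nat i)
  have := (l1.mul l2).mul (ratio_lim k ((i:ℝ)*α))
  simp only [mul_one, inv_one] at this
  refine this.congr' ?_
  filter_upwards [eventually_ge_atTop 1] with m hm
  simp only [Function.comp]
  have hm0 : (0:ℝ) < m := by exact_mod_cast (by omega : 0 < m)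
  have p2 := (A_pos' α (m+i+c) (m+i) (by omega))
  rw [inv_div, Real.div_rpow (by positivity) hm0.le]
  have p5 : (0:ℝ) < (m:ℝ)^((i:ℝ)*α) := by positivity
  field_simp

theorem q1_lim (α : ℝ) (h0 : 0 < α) (h1 : α < 1) (i : ℕ) :
    Tendsto (fun N : ℕ => A α (N-1) (N-1-i) * (N:ℝ)^((i:ℝ)*α) / A α N (N-1)) atTop (𝓝 1) := by
  rw [← tendsto_add_atTop_iff_nat (i+1)]
  refine (Q_lim α h0 h1 i 0 (i+1)).congr fun m => ?_
  rw [show m + (i+1) - 1 - i = m by omega, show m + (i+1) - 1 = m + i by omega]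
  rfl

theorem q2_lim (α : ℝ) (h0 : 0 < α) (h1 : α < 1) (i : ℕ) (hi : 1 ≤ i) :
    Tendsto (fun N : ℕ => A α (N-2) (N-1-i*2) * (N:ℝ)^((i:ℝ)*α) / A α (N-1) (N-1-i))
      atTop (𝓝 1) := by
  rw [← tendsto_add_atTop_iff_nat (i*2+1)]
  refine (Q_lim α h0 h1 i (i-1) (i*2+1)).congr fun m => ?_
  rw [show m + (i*2+1) - 1 - i*2 = m by omega, show m + (i*2+1) - 1 - i = m + i by omega,
    show m + (i*2+1) - 1 = m + i + (i-1) + 1 by omega, show m + (i*2+1) - 2 = m + i + (i-1) by omega]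

end SG

open PTree in
theorem cheb (w : ℕ → ℝ) (hw : ∀ k, 0 ≤ w k) (N i : ℕ) (a ε : ℝ) (hε : 0 < ε) (ha : a ≠ 0)
    (hZ : 0 < ∑ t ∈ trees N, t.weight w) :
    nu w N (fun t => ε < |(t.countOutdeg i : ℝ) / a - 1|) ≤ 
      (ε^2)⁻¹ * (2 * (∑ t ∈ trees N, ((t.countOutdeg i).choose 2 : ℝ) * t.weight w) /
          (∑ t ∈ trees N, t.weight w) / a^2
        + (∑ t ∈ trees N, ((t.countOutdeg i).choose 1 : ℝ) * t.weight w) /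
          (∑ t ∈ trees N, t.weight w) / a * a⁻¹
        - 2 * ((∑ t ∈ trees N, ((t.countOutdeg i).choose 1 : ℝ) * t.weight w) /
          (∑ t ∈ trees N, t.weight w) / a) + 1) := by
  classical
  rw [nu, Zfun_eq, tsum_trees, div_le_iff₀ hZ]
  have e : ∑ t ∈ trees N with ε < |(t.countOutdeg i : ℝ) / a - 1|, t.weight w ≤
      ∑ t ∈ trees N, (ε^2)⁻¹ * (((t.countOutdeg i : ℝ) / a - 1)^2 * t.weight w) := by
    rw [Finset.sum_filter]
    apply Finset.sum_le_sum
    intro t ht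
    have hwt := weight_nonneg w hw t
    split_ifs with h
    · rw [← div_eq_inv_mul, le_div_iff₀ (by positivity), mul_comm]
      apply mul_le_mul_of_nonneg_right _ hwt
      rw [← sq_abs ((t.countOutdeg i : ℝ) / a - 1)]
      gcongr
    · positivity
  refine e.trans (le_of_eq ?_)
  rw [← Finset.mul_sum, mul_assoc]
  congr 1
  have e2 : ∀ t : PTree, ((t.countOutdeg i : ℝ) / a - 1)^2 * t.weight w =
    (2/a^2) * (((t.countOutdeg i).choose 2 : ℝ) * t.weight w) +
    (1/a^2 - 2/a) * (((t.countOutdeg i).choose 1 : ℝ) * t.weight w) + t.weight w := by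
    intro t
    rw [Nat.cast_choose_two, Nat.choose_one_right]
    field_simp
    ring
  simp only [e2]
  rw [Finset.sum_add_distrib, Finset.sum_add_distrib, ← Finset.mul_sum, ← Finset.mul_sum]
  field_simp
  ring

/-- Theorem 3 (iv), case `i < 1/α`: the number `X_{i+1,N}` of vertices of degree `i+1`
satisfies `X_{i+1,N}/n_i → 1` in probability, where `n_i = (i!)^α N^{1−iα}`. -/
theorem stmt_14 (α : ℝ) (h0 : 0 < α) (h1 : α < 1) (i : ℕ) (hi : 1 ≤ i)
    (hiα : (i : ℝ) * α < 1) :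
    ∀ ε : ℝ, 0 < ε →
      Tendsto (fun N : ℕ =>
          nu (fun n => ((n - 1).factorial : ℝ) ^ α) N
            (fun t => ε < |(t.countOutdeg i : ℝ) /
              ((i.factorial : ℝ) ^ α * (N : ℝ) ^ (1 - (i : ℝ) * α)) - 1|))
        atTop (nhds 0) := by
  intro ε hε
  set w : ℕ → ℝ := fun n => ((n - 1).factorial : ℝ) ^ α with hw
  have hwn : ∀ k, 0 ≤ w k := fun k => by rw [hw]; positivity
  have hF : (PowerSeries.mk fun k => w (k+1)) = SG.F α := rfl
  have hwi : w (i+1) = (i.factorial : ℝ)^α := rfl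
  set W : ℝ := (i.factorial : ℝ)^α with hW
  have hW0 : 0 < W := by positivity
  have q1 := SG.q1_lim α h0 h1 i
  have q2 := SG.q2_lim α h0 h1 i hi
  have l3 : Tendsto (fun N : ℕ => ((N:ℝ) - 1)/N) atTop (nhds 1) := by
    refine SG.inv_lim.congr' ?_
    filter_upwards [eventually_ge_atTop 1] with N hN
    have : (0:ℝ) < N := by exact_mod_cast hN
    field_simp
  have l4 : Tendsto (fun N : ℕ => (W * (N:ℝ)^(1 - (i:ℝ)*α))⁻¹) atTop (nhds 0) := by
    apply Tendsto.inv_tendsto_atTop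
    apply Tendsto.const_mul_atTop hW0
    exact (tendsto_rpow_atTop (by linarith)).comp tendsto_natCast_atTop_atTop
  have lim := (((((q1.mul q2).mul l3).add (q1.mul l4)).sub (q1.const_mul 2)).add_const 1).const_mul
    ((ε^2)⁻¹)
  have hz : (ε^2)⁻¹ * ((1:ℝ) * 1 * 1 + 1 * 0 - 2 * 1 + 1) = 0 := by ring
  rw [hz] at lim
  refine squeeze_zero' ?_ ?_ lim
  · filter_upwards with N
    exact div_nonneg (tsum_nonneg fun t => PTree.weight_nonneg w hwn _)
      (tsum_nonneg fun t => PTree.weight_nonneg w hwn _)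
  · filter_upwards [eventually_ge_atTop (2 * i + 3)] with N hN
    have hN0 : (0:ℝ) < N := by exact_mod_cast (by omega : 0 < N)
    have m0 := PTree.moments w i N 0 (by omega) (by omega) (by omega)
    have m1 := PTree.moments w i N 1 (by omega) (by omega) (by omega)
    have m2 := PTree.moments w i N 2 (by omega) (by omega) (by omega)
    rw [hF, hwi] at m0 m1 m2
    rw [← SG.A] at m0 m1 m2
    simp only [Nat.choose_zero_right, Nat.cast_one, one_mul, pow_zero, mul_zero, Nat.sub_zero] at m0
    have hA0 := SG.A_pos' α N (N-1) (by omega)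
    have hA1 := SG.A_pos' α (N-1) (N-1-i) (by omega)
    have hZ : ∑ t ∈ PTree.trees N, t.weight w = SG.A α N (N-1) / N := by
      rw [eq_div_iff hN0.ne', ← m0]; ring
    have hZ0 : 0 < ∑ t ∈ PTree.trees N, t.weight w := by rw [hZ]; positivity
    have hp : (0:ℝ) < (N:ℝ)^((i:ℝ)*α) := by positivity
    have ha : W * (N:ℝ)^(1 - (i:ℝ)*α) = W * (N / (N:ℝ)^((i:ℝ)*α)) := by
      rw [Real.rpow_sub hN0, Real.rpow_one]
    have ch := cheb w hwn N i (W * (N:ℝ)^(1 - (i:ℝ)*α)) ε hε (by positivity) hZ0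
    refine ch.trans (le_of_eq ?_)
    have s1 : (∑ t ∈ PTree.trees N, ((t.countOutdeg i).choose 1 : ℝ) * t.weight w) =
        W * SG.A α (N-1) (N-1-i) := by
      apply mul_left_cancel₀ hN0.ne'
      rw [m1]; simp; ring
    have s2 : 2 * (∑ t ∈ PTree.trees N, ((t.countOutdeg i).choose 2 : ℝ) * t.weight w) =
        (N - 1) * W^2 * SG.A α (N-2) (N-1-i*2) := by
      apply mul_left_cancel₀ hN0.ne'
      rw [mul_left_comm, m2, Nat.cast_choose_two]; ring
    have e1 : W * SG.A α (N-1) (N-1-i) / (SG.A α N (N-1) / N) / (W * (N:ℝ)^(1 - (i:ℝ)*α)) =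
        SG.A α (N-1) (N-1-i) * (N:ℝ)^((i:ℝ)*α) / SG.A α N (N-1) := by
      rw [ha]; field_simp
    have e2 : (N - 1) * W^2 * SG.A α (N-2) (N-1-i*2) / (SG.A α N (N-1) / N) / 
          (W * (N:ℝ)^(1 - (i:ℝ)*α))^2 =
        SG.A α (N-1) (N-1-i) * (N:ℝ)^((i:ℝ)*α) / SG.A α N (N-1) *
        (SG.A α (N-2) (N-1-i*2) * (N:ℝ)^((i:ℝ)*α) / SG.A α (N-1) (N-1-i)) * (((N:ℝ) - 1)/N) := by
      rw [ha]; field_simp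
    rw [s1, s2, hZ, e1, e2]
end

section
/- Simply generated trees with superexponential branching weights (w_{n+1}/w_n → ∞) converge weakly, as N → ∞, in the local (left-ball) topology on the space Γ of rooted planar trees, to the point mass on the infinite star: the tree in which σ(s) = ∞ and every other vertex has degree 1. -/
open Filter

namespace SGT
open PowerSeries

/-- coefficientwise nonnegative -/
def NN (f : PowerSeries ℝ) : Prop := ∀ n, 0 ≤ coeff n f

lemma NN.add {f g : PowerSeries ℝ} (hf : NN f) (hg : NN g) : NN (f + g) := fun n => by
  rw [map_add]; exact add_nonneg (hf n) (hg n)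

lemma NN.mul {f g : PowerSeries ℝ} (hf : NN f) (hg : NN g) : NN (f * g) := fun n => by
  rw [coeff_mul]; exact Finset.sum_nonneg fun x _ => mul_nonneg (hf _) (hg _)

lemma NN.one : NN 1 := fun n => by
  rw [coeff_one]; split_ifs <;> norm_num

lemma NN.pow {f : PowerSeries ℝ} (hf : NN f) (n : ℕ) : NN (f ^ n) := by
  induction n with
  | zero => simpa using NN.one
  | succ n ih => rw [pow_succ]; exact ih.mul hf

lemma NN.C {a : ℝ} (ha : 0 ≤ a) : NN (C a) := fun n => by
  rw [coeff_C]; split_ifs <;> simp [ha]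

lemma NN.X : NN X := fun n => by
  rw [coeff_X]; split_ifs <;> norm_num

lemma NN.sum {ι : Type*} (s : Finset ι) (f : ι → PowerSeries ℝ) (h : ∀ i ∈ s, NN (f i)) :
    NN (∑ i ∈ s, f i) := fun n => by
  rw [map_sum]; exact Finset.sum_nonneg fun i hi => h i hi n

lemma NN.le {f g : PowerSeries ℝ} (h : NN (g - f)) (n : ℕ) : coeff n f ≤ coeff n g := by
  have := h n
  rw [map_sub] at this; linarith

lemma NN.sub_mul {f g h : PowerSeries ℝ} (hfg : NN (g - f)) (hh : NN h) : NN (g * h - f * h) := by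
  rw [← _root_.sub_mul]; exact hfg.mul hh

lemma NN.powsub {f g : PowerSeries ℝ} (hf : NN f) (hg : NN g) (hfg : NN (g - f)) (n : ℕ) :
    NN (g ^ n - f ^ n) := by
  rw [← (Commute.all g f).mul_geom_sum₂]
  exact hfg.mul (NN.sum _ _ fun i _ => (hg.pow _).mul (hf.pow _))

variable (p : ℕ → ℝ)

/-- generating function -/
noncomputable def phi : PowerSeries ℝ := PowerSeries.mk p
/-- without the constant term -/
noncomputable def psi : PowerSeries ℝ := phi p - C (p 0)
/-- Euler derivative -/
noncomputable def xphi : PowerSeries ℝ := PowerSeries.mk fun d => d * p d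

lemma xphi_eq : xphi p = X * derivative ℝ (phi p) := by
  ext n
  cases n with
  | zero => simp [xphi]
  | succ n => simp [xphi, phi, coeff_succ_X_mul, mul_comm, coeff_derivative]

lemma coeff_X_deriv (f : PowerSeries ℝ) (m : ℕ) :
    coeff m (X * derivative ℝ f) = m * coeff m f := by
  cases m with
  | zero => simp
  | succ n => simp [coeff_succ_X_mul, mul_comm, coeff_derivative]

lemma euler (n m : ℕ) :
    (n + 1 : ℝ) * coeff m (xphi p * phi p ^ n) = m * coeff m (phi p ^ (n + 1)) := by
  rw [← coeff_X_deriv, xphi_eq, derivative_pow]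
  have : X * (((n + 1 : ℕ) : PowerSeries ℝ) * phi p ^ (n + 1 - 1) * derivative ℝ (phi p))
      = C (n + 1 : ℝ) * (X * derivative ℝ (phi p) * phi p ^ n) := by
    simp only [Nat.add_sub_cancel, map_add, map_natCast, map_one, Nat.cast_add, Nat.cast_one]; ring
  rw [this, coeff_C_mul]

variable {p} (hp : ∀ n, 0 ≤ p n)
include hp

lemma NN_phi : NN (phi p) := fun n => by simpa [phi] using hp n
lemma NN_xphi : NN (xphi p) := fun n => by
  simp only [xphi, coeff_mk]; exact mul_nonneg (Nat.cast_nonneg _) (hp n)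
lemma NN_psi : NN (psi p) := fun n => by
  simp only [psi, phi, map_sub, coeff_mk, coeff_C]
  split_ifs with h
  · simp [h]
  · simpa using hp n

lemma S_lower (M : ℕ) : p 0 ^ M * p M ≤ coeff M (phi p ^ (M + 1)) := by
  have h : NN (phi p ^ M - C (p 0) ^ M) := by
    refine NN.powsub (NN.C (hp 0)) (NN_phi hp) ?_ M
    exact NN_psi hp
  have := (h.sub_mul (NN_phi hp)).le M
  rw [← map_pow, coeff_C_mul, ← pow_succ] at this
  simpa [phi] using this

/-- Bound of the ψ Euler part. -/
lemma xpsi_le (m : ℕ) :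
    coeff (m+1) (xphi p * psi p * phi p ^ m) ≤ coeff (m+1) (psi p * phi p ^ (m+1)) := by
  have e : xphi p * psi p * phi p ^ m = psi p * (xphi p * phi p ^ m) := by ring
  rw [e, coeff_mul, coeff_mul]
  refine Finset.sum_le_sum fun x hx => mul_le_mul_of_nonneg_left ?_ (NN_psi hp _)
  have h := euler p m x.2
  have h2 : x.2 ≤ m + 1 := by
    have := Finset.HasAntidiagonal.mem_antidiagonal.1 hx; omega
  have h3 : (x.2 : ℝ) ≤ m + 1 := by exact_mod_cast h2
  have h4 := (NN_phi hp).pow (m+1) x.2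
  have h5 : (0:ℝ) < m + 1 := by positivity
  nlinarith

lemma powdiff (k n : ℕ) (hk : 1 ≤ n + k) :
    NN (C (p 0) ^ k * phi p ^ n - (phi p ^ (n + k) - C (k : ℝ) * psi p * phi p ^ (n + k - 1))) := by
  induction k with
  | zero => 
    have : C (p 0) ^ 0 * phi p ^ n - (phi p ^ (n + 0) - C ((0:ℕ) : ℝ) * psi p * phi p ^ (n + 0 - 1))
      = 0 := by simp
    rw [this]; intro n; simp
  | succ k ih =>
    rcases Nat.eq_zero_or_pos (n + k) with h0 | h0
    · obtain ⟨rfl, rfl⟩ : n = 0 ∧ k = 0 := by omega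
      have : C (p 0) ^ (0+1) * phi p ^ 0 - (phi p ^ (0 + (0+1)) - C ((0+1:ℕ) : ℝ) * psi p * phi p ^ (0 + (0+1) - 1))
        = 0 := by simp [psi]
      rw [this]; intro n; simp
    · have ih := ih h0
      obtain ⟨q, hq⟩ : ∃ q, n + k = q + 1 := ⟨n + k - 1, by omega⟩
      have e1 : n + (k+1) = q + 2 := by omega
      rw [e1]; rw [hq] at ih
      have e2 : q + 2 - 1 = q + 1 := rfl
      have e3 : q + 1 - 1 = q := rfl
      rw [e2]; rw [e3] at ih
      have key : C (p 0) ^ (k+1) * phi p ^ n - (phi p ^ (q + 2) - C ((k+1:ℕ) : ℝ) * psi p * phi p ^ (q+1))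
        = C (p 0) * (C (p 0) ^ k * phi p ^ n - (phi p ^ (q+1) - C (k : ℝ) * psi p * phi p ^ q))
          + C (k:ℝ) * psi p * phi p ^ q * psi p := by
        simp only [psi, Nat.cast_add, Nat.cast_one, map_add, map_one]; ring
      rw [key]
      exact ((NN.C (hp 0)).mul ih).add ((((NN.C (Nat.cast_nonneg k)).mul (NN_psi hp)).mul
        ((NN_phi hp).pow q)).mul (NN_psi hp))

/-- θ-series lower bound -/
lemma theta_bound (k n : ℕ) (hk : 1 ≤ n + k) :
    ((n + k : ℕ) : ℝ) / ((n + k : ℕ) + 1) * coeff (n + k) (phi p ^ (n + k + 1))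
      - 2 * k * coeff (n + k) (psi p * phi p ^ (n + k))
    ≤ p 0 ^ k * coeff n ((PowerSeries.mk fun d => (d : ℝ) * p (k + d)) * phi p ^ n) := by
  set θ := (PowerSeries.mk fun d => (d : ℝ) * p (k + d)) with hθ
  have h1 : NN (X ^ k * θ - (xphi p - C (k:ℝ) * psi p)) := by
    intro d
    simp only [map_sub, coeff_C_mul, coeff_X_pow_mul', xphi, coeff_mk, psi, phi, coeff_C, hθ]
    have := hp d
    split_ifs with h1 h2 h2
    · have : k = 0 := by omega
      subst this; subst h2; simp
    · rw [Nat.cast_sub h1, show k + (d - k) = d by omega]; apply le_of_eq; ring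
    · subst h2; simp
    · have : (d:ℝ) ≤ k := by exact_mod_cast (by omega : d ≤ k)
      nlinarith
  have hP : NN (C (p 0) ^ k * phi p ^ n) := ((NN.C (hp 0)).pow k).mul ((NN_phi hp).pow n)
  have h2 := (h1.sub_mul hP).le (n + k)
  have e0 : X ^ k * θ * (C (p 0) ^ k * phi p ^ n) = C (p 0 ^ k) * (X ^ k * (θ * phi p ^ n)) := by
    rw [map_pow]; ring
  rw [e0, coeff_C_mul, coeff_X_pow_mul] at h2
  refine le_trans ?_ h2
  have h3 : NN (phi p ^ (n+k) - C (p 0) ^ k * phi p ^ n) := by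
    have := (NN.powsub (NN.C (hp 0)) (NN_phi hp) (NN_psi hp) k).sub_mul ((NN_phi hp).pow n)
    rwa [← pow_add, add_comm k n] at this
  have h4 := (h3.sub_mul (NN_psi hp)).le (n + k)
  have h5 := ((powdiff hp k n hk).sub_mul (NN_xphi hp)).le (n + k)
  obtain ⟨m, hm⟩ : ∃ m, n + k = m + 1 := ⟨n + k - 1, by omega⟩
  have h6 := xpsi_le hp m
  have h7 := euler p (m+1) (m+1)
  rw [_root_.sub_mul, map_sub]
  rw [hm] at h4 h5 ⊢
  rw [show m + 1 - 1 = m from rfl] at h5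
  rw [_root_.sub_mul, map_sub, 
    show C (k:ℝ) * psi p * phi p ^ m * xphi p = C (k:ℝ) * (xphi p * psi p * phi p ^ m) by ring,
    coeff_C_mul] at h5
  rw [mul_assoc (C (k:ℝ)), coeff_C_mul]
  have h8 : ((m+1:ℕ):ℝ) / ((m+1:ℕ) + 1) * coeff (m+1) (phi p ^ (m+1+1)) =
    coeff (m+1) (phi p ^ (m+1) * xphi p) := by
    rw [mul_comm (phi p ^ (m+1)), div_mul_eq_mul_div, div_eq_iff (by positivity), ← h7]; ring
  rw [h8]
  rw [mul_comm (xphi p) (C (p 0) ^ k * phi p ^ n), mul_comm (psi p) (C (p 0) ^ k * phi p ^ n)]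
  rw [mul_comm (phi p ^ (m+1)) (psi p)] at h4
  have hk0 : (0:ℝ) ≤ k := Nat.cast_nonneg k
  nlinarith

omit hp in
lemma tail_superexp (c : ℝ) (hc : 0 < c) (hr : Tendsto (fun n => p (n + 1) / p n) atTop atTop) :
    Tendsto (fun M => c ^ M / p M) atTop (nhds 0) := by
  refine Summable.tendsto_atTop_zero ?_
  have hne : ∀ᶠ n in atTop, p n ≠ 0 := by
    filter_upwards [hr.eventually_gt_atTop 0] with n hn h
    simp [h] at hn
  refine summable_of_ratio_test_tendsto_lt_one (l := 0) (by norm_num) ?_ ?_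
  · filter_upwards [hne] with n hn
    exact div_ne_zero (by positivity) hn
  · have : Tendsto (fun n => c / (p (n+1) / p n)) atTop (nhds 0) := hr.const_div_atTop c
    have := this.norm
    rw [norm_zero] at this
    refine this.congr' ?_
    filter_upwards [hne, (tendsto_add_atTop_nat 1).eventually hne] with n hn hn1
    rw [← norm_div]; congr 1
    have : c ^ n ≠ 0 := by positivity
    rw [pow_succ]
    field_simp

lemma growth (hr : Tendsto (fun n => p (n + 1) / p n) atTop atTop) (a : ℕ) (ha : 1 ≤ a) (R : ℝ) :
    ∃ L, ∀ d, L ≤ d → R * p d ≤ p (d + a) := by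
  obtain ⟨L, hL⟩ := (hr.eventually_ge_atTop (max R 1)).exists_forall_of_atTop
  have h1 : ∀ d, L ≤ d → max R 1 * p d ≤ p (d + 1) := by
    intro d hd
    have h := hL d hd
    have h0 : 0 < p d := by
      rcases (hp d).eq_or_lt with h' | h'
      · rw [← h'] at h; simp at h; linarith
      · exact h'
    rwa [le_div_iff₀ h0] at h
  have h2 : ∀ i d, L ≤ d → p d ≤ p (d + i) := by
    intro i d hd
    induction i with
    | zero => simp
    | succ i ih =>
      have := h1 (d + i) (by omega)
      have h3 := hp (d+i)
      have h4 := le_max_right R 1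
      rw [← add_assoc]; nlinarith
  refine ⟨L, fun d hd => ?_⟩
  have := h1 d hd
  have h3 := h2 (a - 1) (d+1) (by omega)
  rw [show d + 1 + (a - 1) = d + a by omega] at h3
  have h4 := le_max_left R 1
  nlinarith [hp d]

lemma single_a (h0 : 0 < p 0) (hr : Tendsto (fun n => p (n + 1) / p n) atTop atTop)
    (a : ℕ) (ha : 1 ≤ a) (ε : ℝ) (hε : 0 < ε) :
    ∀ᶠ M in atTop, p a * coeff M (X ^ a * phi p ^ M) ≤ ε * coeff M (phi p ^ (M + 1)) := by
  obtain ⟨L, hL⟩ := growth hp hr a ha (p a / (ε / 2 * p 0))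
  set q := trunc L (phi p) with hq
  set A : PowerSeries ℝ := (q : PowerSeries ℝ) with hA
  have cA : ∀ d, coeff d A = if d < L then p d else 0 := by
    intro d; rw [hA, Polynomial.coeff_coe, hq, coeff_trunc]; simp [phi]
  have nA : NN A := fun d => by rw [cA]; split_ifs <;> simp [hp]
  have nB : NN (phi p - A) := fun d => by
    rw [map_sub, cA]; simp only [phi, coeff_mk]; split_ifs <;> simp [hp]
  have hB : NN (C (ε / 2 * p 0) * (phi p - A) - C (p a) * X ^ a * (phi p - A)) := by
    intro d
    rw [mul_assoc, map_sub, coeff_C_mul, coeff_C_mul, coeff_X_pow_mul']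
    have hd : 0 ≤ ε / 2 * p 0 * coeff d (phi p - A) := mul_nonneg (by positivity) (nB d)
    split_ifs with h
    · simp only [map_sub, cA, phi, coeff_mk] at hd ⊢
      by_cases h' : d - a < L
      · simp only [h', if_true, sub_self, mul_zero, sub_zero]; exact hd
      · rw [if_neg h', if_neg (by omega : ¬ d < L)]
        have := hL (d - a) (by omega)
        rw [show d - a + a = d by omega, div_mul_eq_mul_div, div_le_iff₀ (by positivity)] at this
        linarith
    · simpa using hd
  have hmain : ∀ M, p a * coeff M (X ^ a * phi p ^ M) - p a * coeff M (X ^ a * A ^ M)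
      ≤ ε / 2 * coeff M (phi p ^ (M + 1)) := by
    intro M
    have n1 : NN (∑ i ∈ Finset.range M, phi p ^ i * A ^ (M - 1 - i)) :=
      NN.sum _ _ fun i _ => ((NN_phi hp).pow _).mul (nA.pow _)
    have h1 := (hB.sub_mul n1).le M
    rw [mul_assoc, mul_assoc, (Commute.all (phi p) A).mul_geom_sum₂, mul_assoc, coeff_C_mul,
      coeff_C_mul, mul_sub, map_sub, mul_sub] at h1
    refine h1.trans ?_
    rw [mul_assoc]
    refine mul_le_mul_of_nonneg_left ?_ (by positivity)
    have h2 := ((NN_psi hp).mul ((NN_phi hp).pow M)) M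
    rw [psi, _root_.sub_mul, map_sub, coeff_C_mul, ← pow_succ'] at h2
    have h3 := nA.pow M M
    rw [(Commute.all (phi p) A).mul_geom_sum₂, map_sub]
    nlinarith
  have hpoly : ∀ M m, coeff m (A ^ M) ≤ (q.eval 1) ^ M := by
    intro M m
    have e : coeff m (A ^ M) = (q ^ M).coeff m := by
      rw [hA, ← Polynomial.coe_pow, Polynomial.coeff_coe]
    have nn : ∀ j, 0 ≤ (q ^ M).coeff j := fun j => by
      have := nA.pow M j
      rwa [hA, ← Polynomial.coe_pow, Polynomial.coeff_coe] at this
    rw [e, ← Polynomial.eval_pow, Polynomial.eval_eq_sum_range]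
    simp only [one_pow, mul_one]
    by_cases hm : m ≤ (q ^ M).natDegree
    · exact Finset.single_le_sum (f := fun i => (q ^ M).coeff i) (fun i _ => nn i)
        (Finset.mem_range.2 (by omega))
    · rw [Polynomial.coeff_eq_zero_of_natDegree_lt (by omega)]
      exact Finset.sum_nonneg fun i _ => nn i
  have hq0 : 0 ≤ q.eval 1 := by
    have := hpoly 1 0
    have h' := nA.pow 1 0
    rw [pow_one (q.eval 1)] at this; linarith
  have ht := tail_superexp (p := p) ((q.eval 1 + 1) / p 0) (by positivity) hr
  have ht' := ht.const_mul (p a)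
  rw [mul_zero] at ht'
  have hne : ∀ᶠ n in atTop, p n ≠ 0 := by
    filter_upwards [hr.eventually_gt_atTop 0] with n hn h
    simp [h] at hn
  filter_upwards [hne, ht'.eventually (gt_mem_nhds (half_pos hε))] with M hM hM2
  have hMp : 0 < p M := lt_of_le_of_ne (hp M) hM.symm
  have h1 := hmain M
  have h2 : coeff M (X ^ a * A ^ M) ≤ (q.eval 1 + 1) ^ M := by
    have h3 : q.eval 1 ^ M ≤ (q.eval 1 + 1) ^ M := pow_le_pow_left₀ hq0 (by linarith) M
    rw [coeff_X_pow_mul']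
    split_ifs
    · exact (hpoly _ _).trans h3
    · positivity
  have h3 := S_lower hp M
  have h4 : p a * (q.eval 1 + 1) ^ M ≤ ε / 2 * (p 0 ^ M * p M) := by
    rw [div_pow, div_div, ← mul_div_assoc, div_lt_iff₀ (by positivity)] at hM2
    exact hM2.le
  have h5 := mul_le_mul_of_nonneg_left h2 (hp a)
  have h6 := mul_le_mul_of_nonneg_left h3 (half_pos hε).le
  linarith

lemma psi_small (h0 : 0 < p 0) (hr : Tendsto (fun n => p (n + 1) / p n) atTop atTop)
    (ε : ℝ) (hε : 0 < ε) :
    ∀ᶠ M in atTop, coeff M (psi p * phi p ^ M) ≤ ε * coeff M (phi p ^ (M + 1)) := by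
  obtain ⟨K, hK⟩ := exists_nat_gt (2 / ε)
  have hK0 : (0:ℝ) < K := lt_trans (by positivity) hK
  have hall : ∀ᶠ M in atTop, ∀ a ∈ Finset.Icc 1 K,
      p a * coeff M (X ^ a * phi p ^ M) ≤ (ε / 2 / K) * coeff M (phi p ^ (M + 1)) := by
    rw [Filter.eventually_all_finset]
    intro a ha
    exact single_a hp h0 hr a (Finset.mem_Icc.1 ha).1 _ (by positivity)
  filter_upwards [hall] with M hM
  have h1 : NN ((∑ a ∈ Finset.Icc 1 K, C (p a) * X ^ a) + C (1 / (K:ℝ)) * xphi p - psi p) := by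
    intro d
    rw [map_sub, map_add, map_sum, coeff_C_mul]
    simp only [coeff_C_mul, coeff_X_pow, mul_ite, mul_one, mul_zero, Finset.sum_ite_eq, xphi, psi,
      phi, coeff_mk, map_sub, coeff_C, Finset.mem_Icc]
    have := hp d
    have hx : 0 ≤ 1 / (K:ℝ) * (d * p d) := by positivity
    split_ifs with h1 h2 h2
    · omega
    · linarith
    · subst h2; simp
    · have hd : (K:ℝ) ≤ d := by exact_mod_cast (by omega : K ≤ d)
      have : p d ≤ 1 / (K:ℝ) * (d * p d) := by
        rw [div_mul_eq_mul_div, le_div_iff₀ hK0]; nlinarith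
      linarith
  have h2 := (h1.sub_mul ((NN_phi hp).pow M)).le M
  refine h2.trans ?_
  rw [add_mul, Finset.sum_mul, map_add, map_sum, mul_assoc, coeff_C_mul]
  have h3 := euler p M M
  have hS := (NN_phi hp).pow (M+1) M
  have h4 : coeff M (xphi p * phi p ^ M) ≤ coeff M (phi p ^ (M+1)) := by
    have : 0 ≤ coeff M (xphi p * phi p ^ M) := (NN_xphi hp).mul ((NN_phi hp).pow M) M
    have hM0 : (0:ℝ) ≤ M := Nat.cast_nonneg M
    nlinarith
  have h5 : ∑ a ∈ Finset.Icc 1 K, coeff M (C (p a) * X ^ a * phi p ^ M)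
      ≤ ε / 2 * coeff M (phi p ^ (M + 1)) := by
    calc _ ≤ ∑ a ∈ Finset.Icc 1 K, (ε / 2 / K) * coeff M (phi p ^ (M + 1)) := by
          refine Finset.sum_le_sum fun a ha => ?_
          rw [mul_assoc, coeff_C_mul]; exact hM a ha
      _ = _ := by
          rw [Finset.sum_const, Nat.card_Icc, nsmul_eq_mul, Nat.add_sub_cancel]
          field_simp
  have h6 : 1 / (K:ℝ) ≤ ε / 2 := by
    rw [div_le_iff₀ hK0]; rw [div_lt_iff₀ hε] at hK; linarith
  have h7 := mul_le_mul h6 h4 ((NN_xphi hp).mul ((NN_phi hp).pow M) M) (by positivity)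
  linarith

end SGT
namespace SGT
open PowerSeries

lemma size_node (ts : List PTree) : (PTree.node ts).size = 1 + (ts.map PTree.size).sum := by
  rw [PTree.size, List.attach_map_val]

lemma weight_node (w : ℕ → ℝ) (ts : List PTree) :
    (PTree.node ts).weight w = w (ts.length + 1) * (ts.map (PTree.weight w)).prod := by
  rw [PTree.weight, List.attach_map_val]

/-- merge the first `d` trees under a new vertex -/
def graft (d : ℕ) (L : List PTree) : List PTree := PTree.node (L.take d) :: L.drop d

open Classical in
/-- forests with `j` trees, `n` vertices -/
noncomputable def forests : ℕ → ℕ → Finset (List PTree)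
  | j, 0 => if j = 0 then {[]} else ∅
  | 0, _ + 1 => ∅
  | j + 1, n + 1 => (Finset.range (n + 1)).biUnion fun d => (forests (j + d) n).image (graft d)

lemma size_pos (t : PTree) : 1 ≤ t.size := by
  cases t; rw [size_node]; omega

lemma length_le (L : List PTree) : L.length ≤ (L.map PTree.size).sum := by
  induction L with
  | nil => simp
  | cons t L ih => have := size_pos t; simp only [List.map_cons, List.sum_cons, List.length_cons]; omega

lemma mem_forests (n : ℕ) : ∀ j L, L ∈ forests j n ↔ L.length = j ∧ (L.map PTree.size).sum = n := by
  induction n with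
  | zero =>
    intro j L
    rw [forests]
    constructor
    · intro h
      split_ifs at h with hj
      · rw [Finset.mem_singleton] at h; subst h; simp [hj]
      · simp at h
    · rintro ⟨h1, h2⟩
      have := length_le L
      have h3 : L.length = 0 := by omega
      rw [if_pos (by omega), Finset.mem_singleton]
      exact List.length_eq_zero_iff.1 h3
  | succ n ih =>
    intro j L
    cases j with
    | zero =>
      rw [forests]
      constructor
      · intro h; simp at h
      · rintro ⟨h1, h2⟩
        rw [List.length_eq_zero_iff] at h1; subst h1; simp at h2
    | succ j =>
      rw [forests]
      simp only [Finset.mem_biUnion, Finset.mem_image, Finset.mem_range, ih]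
      constructor
      · rintro ⟨d, hd, L', ⟨h1, h2⟩, rfl⟩
        refine ⟨by simp [graft]; omega, ?_⟩
        simp only [graft, List.map_cons, List.sum_cons, size_node]
        rw [← List.take_append_drop d L', List.map_append, List.sum_append] at h2
        omega
      · rintro ⟨h1, h2⟩
        cases L with
        | nil => simp at h1
        | cons t L =>
          cases t with
          | node ts =>
            simp only [List.map_cons, List.sum_cons, size_node, List.length_cons] at h1 h2
            have := length_le ts
            refine ⟨ts.length, by omega, ts ++ L, ⟨by simp; omega, by simp; omega⟩, ?_⟩
            simp [graft]

lemma graft_inj {j d d' : ℕ} {L L' : List PTree} (h1 : L.length = j + d) (h2 : L'.length = j + d')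
    (h : graft d L = graft d' L') : d = d' ∧ L = L' := by
  simp only [graft, List.cons.injEq, PTree.node.injEq] at h
  obtain ⟨ha, hb⟩ := h
  constructor
  · have := congrArg List.length ha
    simp only [List.length_take] at this; omega
  · rw [← List.take_append_drop d L, ← List.take_append_drop d' L', ha, hb]

/-- total weight of forests -/
noncomputable def F (w : ℕ → ℝ) (j n : ℕ) : ℝ :=
  ∑ L ∈ forests j n, (L.map (PTree.weight w)).prod

lemma F_succ (w : ℕ → ℝ) (j n : ℕ) :
    F w (j + 1) (n + 1) = ∑ d ∈ Finset.range (n + 1), w (d + 1) * F w (j + d) n := by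
  classical
  unfold F
  rw [forests, Finset.sum_biUnion]
  · refine Finset.sum_congr rfl fun d _ => ?_
    rw [Finset.sum_image, Finset.mul_sum]
    · refine Finset.sum_congr rfl fun L hL => ?_
      have hl := ((mem_forests _ _ _).1 hL).1
      simp only [graft, List.map_cons, List.prod_cons, weight_node]
      rw [mul_assoc, ← List.prod_append, ← List.map_append, List.take_append_drop, List.length_take,
        min_eq_left (by omega)]
    · intro L hL L' hL' h
      exact (graft_inj ((mem_forests _ _ _).1 hL).1 ((mem_forests _ _ _).1 hL').1 h).2
  · intro d _ d' _ hdd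
    rw [Function.onFun, Finset.disjoint_left]
    intro L hL hL'
    obtain ⟨A, hA, rfl⟩ := Finset.mem_image.1 hL
    obtain ⟨B, hB, hBA⟩ := Finset.mem_image.1 hL'
    exact hdd (graft_inj ((mem_forests _ _ _).1 hA).1 ((mem_forests _ _ _).1 hB).1 hBA.symm).1

lemma F_formula (w : ℕ → ℝ) (n : ℕ) : ∀ j, (n + 1 : ℝ) * F w j (n + 1) =
    j * coeff (n + 1) (X ^ j * phi (fun d => w (d + 1)) ^ (n + 1)) := by
  set p : ℕ → ℝ := fun d => w (d + 1) with hpdef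
  induction n with
  | zero =>
    intro j
    rcases j with _ | j
    · simp [F, forests]
    · rw [F_succ]
      simp only [zero_add, Finset.range_one, Finset.sum_singleton, add_zero]
      rcases j with _ | j
      · simp [F, forests, coeff_X_pow_mul', phi, p]
      · simp [F, forests, coeff_X_pow_mul']
  | succ n ih =>
    intro j
    rcases j with _ | j
    · simp [F, forests]
    · rw [F_succ]
      have hn : (n + 1 : ℝ) ≠ 0 := by positivity
      have e : ∀ d, F w (j + d) (n+1) =
          (j + d : ℝ) / (n+1) * coeff (n+1) (X ^ (j + d) * phi p ^ (n+1)) := by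
        intro d
        have := ih (j + d)
        rw [div_mul_eq_mul_div, eq_div_iff hn, mul_comm, this]; push_cast; ring
      simp only [e]
      by_cases hj : j ≤ n + 1
      · obtain ⟨m, hm⟩ : ∃ m, n + 1 = j + m := ⟨n + 1 - j, by omega⟩
        have c1 : coeff (n + 1 + 1) (X ^ (j+1) * phi p ^ (n+1+1)) = coeff m (phi p ^ (n+1+1)) := by
          rw [coeff_X_pow_mul', if_pos (by omega)]; congr 2; omega
        have s1 : coeff m (phi p ^ (n+1+1)) = ∑ d ∈ Finset.range (m+1), p d * coeff (m - d) (phi p ^ (n+1)) := by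
          rw [pow_succ', coeff_mul, Finset.Nat.sum_antidiagonal_eq_sum_range_succ_mk]
          simp [phi]
        have s2 : coeff m (xphi p * phi p ^ (n+1)) = ∑ d ∈ Finset.range (m+1), d * p d * coeff (m - d) (phi p ^ (n+1)) := by
          rw [coeff_mul, Finset.Nat.sum_antidiagonal_eq_sum_range_succ_mk]
          simp [xphi]
        have s3 : ∑ d ∈ Finset.range (n + 1 + 1), w (d + 1) * ((j + d : ℝ) / (n+1) * coeff (n+1) (X ^ (j + d) * phi p ^ (n+1)))
            = ∑ d ∈ Finset.range (m+1), p d * ((j + d : ℝ) / (n+1) * coeff (m - d) (phi p ^ (n+1))) := by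
          symm
          refine Finset.sum_subset_zero_on_sdiff (Finset.range_mono (by omega)) ?_ ?_
          · intro d hd
            simp only [Finset.mem_sdiff, Finset.mem_range] at hd
            rw [coeff_X_pow_mul', if_neg (by omega)]; simp
          · intro d hd
            rw [Finset.mem_range] at hd
            rw [coeff_X_pow_mul', if_pos (by omega), show n + 1 - (j + d) = m - d by omega]
        have s4 : ∑ d ∈ Finset.range (m+1), p d * ((j + d : ℝ) / (n+1) * coeff (m - d) (phi p ^ (n+1)))
            = (j * coeff m (phi p ^ (n+1+1)) + coeff m (xphi p * phi p ^ (n+1))) / (n + 1) := by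
          rw [s1, s2, Finset.mul_sum, ← Finset.sum_add_distrib, Finset.sum_div]
          refine Finset.sum_congr rfl fun d _ => ?_
          ring
        rw [s3, s4, c1]
        have h := euler p (n+1) m
        have hm' : (n + 1 : ℝ) = j + m := by exact_mod_cast hm
        rw [← mul_div_assoc, div_eq_iff hn]
        push_cast at h ⊢
        rw [mul_add, h]
        have hm2 : (m:ℝ) = n + 1 - j := by linarith
        rw [hm2]; ring
      · rw [coeff_X_pow_mul', if_neg (by omega), Finset.sum_eq_zero]
        · simp
        · intro d _
          rw [coeff_X_pow_mul', if_neg (by omega)]; simp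

lemma weight_nonneg (w : ℕ → ℝ) (hw : ∀ n, 1 ≤ n → 0 ≤ w n) (n : ℕ) :
    ∀ t : PTree, t.size ≤ n → 0 ≤ t.weight w := by
  induction n with
  | zero => intro t ht; have := size_pos t; omega
  | succ n ih =>
    intro t ht
    cases t with
    | node ts =>
      rw [weight_node]
      refine mul_nonneg (hw _ (by omega)) (List.prod_nonneg ?_)
      intro a ha
      obtain ⟨t, hts, rfl⟩ := List.mem_map.1 ha
      refine ih t ?_
      rw [size_node] at ht
      have := List.single_le_sum (l := ts.map PTree.size) (fun _ _ => Nat.zero_le _) _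
        (List.mem_map_of_mem (f := PTree.size) hts)
      omega

open Classical in
/-- trees of size n -/
noncomputable def trees (n : ℕ) : Finset PTree :=
  (forests 1 n).image fun L => L.headD (PTree.node [])

lemma mem_trees (n : ℕ) (t : PTree) : t ∈ trees n ↔ t.size = n := by
  simp only [trees, Finset.mem_image, mem_forests]
  constructor
  · rintro ⟨L, ⟨h1, h2⟩, rfl⟩
    obtain ⟨a, rfl⟩ := List.length_eq_one_iff.1 h1
    simpa using h2
  · intro h
    exact ⟨[t], by simpa using h, rfl⟩

lemma sum_trees (w : ℕ → ℝ) (n : ℕ) : ∑ t ∈ trees n, t.weight w = F w 1 n := by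
  classical
  rw [trees, Finset.sum_image]
  · refine Finset.sum_congr rfl fun L hL => ?_
    obtain ⟨a, rfl⟩ := List.length_eq_one_iff.1 ((mem_forests _ _ _).1 hL).1
    simp
  · intro L hL L' hL' h
    obtain ⟨a, rfl⟩ := List.length_eq_one_iff.1 ((mem_forests _ _ _).1 hL).1
    obtain ⟨b, rfl⟩ := List.length_eq_one_iff.1 ((mem_forests _ _ _).1 hL').1
    simpa using h

lemma tsum_fin (f : PTree → ℝ) (s : Finset PTree) (P : PTree → Prop) (h : ∀ t, t ∈ s ↔ P t) :
    ∑' t : {t : PTree // P t}, f t.1 = ∑ t ∈ s, f t := by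
  rw [← Finset.tsum_subtype s f]
  exact (Equiv.subtypeEquivRight h).symm.tsum_eq (fun t : {t // t ∈ s} => f t.1)

lemma Zfun_eq (w : ℕ → ℝ) (n : ℕ) : Zfun w n = F w 1 n := by
  rw [← sum_trees, Zfun]
  exact tsum_fin _ _ _ (mem_trees n)

/-- the good event -/
def Good (k : ℕ) (t : PTree) : Prop :=
  k ≤ t.children.length ∧ ∀ c ∈ t.children.take k, c.children.length = 0

/-- numerator -/
noncomputable def Num (w : ℕ → ℝ) (k N : ℕ) : ℝ :=
  ∑' t : {t : PTree // t.size = N ∧ Good k t}, t.1.weight w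

lemma Num_eq (w : ℕ → ℝ) (k N : ℕ) [DecidablePred (Good k)] :
    Num w k N = ∑ t ∈ (trees N).filter (Good k), t.weight w := by
  rw [Num]
  refine tsum_fin _ _ _ fun t => ?_
  rw [Finset.mem_filter, mem_trees]

lemma Num_le (w : ℕ → ℝ) (hw : ∀ n, 1 ≤ n → 0 ≤ w n) (k N : ℕ) : Num w k N ≤ Zfun w N := by
  classical
  rw [Num_eq, Zfun_eq, ← sum_trees]
  exact Finset.sum_le_sum_of_subset_of_nonneg (Finset.filter_subset _ _)
    fun t _ _ => weight_nonneg w hw _ t le_rfl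

lemma Num_ge (w : ℕ → ℝ) (hw : ∀ n, 1 ≤ n → 0 ≤ w n) (k n : ℕ) :
    ∑ d ∈ Finset.range (n + 1), w (k + d + 1) * (w 1 ^ k * F w d n) ≤ Num w k (n + k + 1) := by
  classical
  set g : List PTree → PTree := fun L => PTree.node (List.replicate k (PTree.node []) ++ L) with hg
  have ginj : Function.Injective g := by
    intro L L' h
    simpa [hg] using h
  have hleaf : (PTree.node []).weight w = w 1 := by rw [weight_node]; simp
  have hleafs : (PTree.node []).size = 1 := by rw [size_node]; simp
  set s := (Finset.range (n + 1)).biUnion fun d => (forests d n).image g with hs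
  have hsum : ∑ d ∈ Finset.range (n + 1), w (k + d + 1) * (w 1 ^ k * F w d n)
      = ∑ t ∈ s, t.weight w := by
    rw [hs, Finset.sum_biUnion]
    · refine Finset.sum_congr rfl fun d _ => ?_
      rw [Finset.sum_image (fun _ _ _ _ h => ginj h), F, Finset.mul_sum, Finset.mul_sum]
      refine Finset.sum_congr rfl fun L hL => ?_
      have hl := ((mem_forests _ _ _).1 hL).1
      rw [hg]
      simp only [weight_node w (_ ++ L), List.length_append, List.length_replicate, List.map_append,
        List.map_replicate, List.prod_append, List.prod_replicate, hleaf, hl]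
    · intro d _ d' _ hdd
      rw [Function.onFun, Finset.disjoint_left]
      intro L hL hL'
      obtain ⟨A, hA, rfl⟩ := Finset.mem_image.1 hL
      obtain ⟨B, hB, hBA⟩ := Finset.mem_image.1 hL'
      have := ginj hBA
      subst this
      exact hdd (((mem_forests _ _ _).1 hA).1.symm.trans ((mem_forests _ _ _).1 hB).1)
  rw [hsum, Num_eq]
  refine Finset.sum_le_sum_of_subset_of_nonneg ?_ fun t _ _ => weight_nonneg w hw _ t le_rfl
  intro t ht
  rw [hs] at ht
  obtain ⟨d, _, ht⟩ := Finset.mem_biUnion.1 ht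
  obtain ⟨L, hL, rfl⟩ := Finset.mem_image.1 ht
  obtain ⟨h1, h2⟩ := (mem_forests _ _ _).1 hL
  rw [Finset.mem_filter, mem_trees]
  refine ⟨?_, ?_, ?_⟩
  · simp only [hg, size_node (_ ++ L), List.map_append, List.map_replicate, List.sum_append,
      List.sum_replicate, hleafs, h2]
    simp; omega
  · simp [hg, PTree.children]
  · intro c hc
    have : c = PTree.node [] := by
      simp [hg, PTree.children] at hc
      exact hc.2
    subst this; simp [PTree.children]

lemma Num_ge' (w : ℕ → ℝ) (hw : ∀ n, 1 ≤ n → 0 ≤ w n) (k n : ℕ) :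
    w 1 ^ k * coeff (n+1) ((PowerSeries.mk fun d => (d : ℝ) * w (k + d + 1)) *
      phi (fun d => w (d + 1)) ^ (n+1)) ≤ (n + 1) * Num w k (n + 1 + k + 1) := by
  have hn : (0:ℝ) < n + 1 := by positivity
  refine le_trans (le_of_eq ?_) (mul_le_mul_of_nonneg_left (Num_ge w hw k (n+1)) hn.le)
  rw [coeff_mul, Finset.Nat.sum_antidiagonal_eq_sum_range_succ_mk, Finset.mul_sum, Finset.mul_sum]
  refine Finset.sum_congr rfl fun d hd => ?_
  rw [Finset.mem_range] at hd
  have h := F_formula w n d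
  rw [coeff_X_pow_mul', if_pos (by omega)] at h
  simp only [coeff_mk]
  calc _ = w (k + d + 1) * w 1 ^ k * (d * coeff (n + 1 - d) (phi (fun d => w (d + 1)) ^ (n+1))) := by ring
    _ = _ := by rw [← h]; ring

lemma main (w : ℕ → ℝ) (hw : ∀ n, 1 ≤ n → 0 ≤ w n) (h1 : 0 < w 1)
    (hratio : Tendsto (fun n => w (n + 1) / w n) atTop atTop) (k : ℕ) :
    Tendsto (fun N : ℕ => Num w k N / Zfun w N) atTop (nhds 1) := by
  set p : ℕ → ℝ := fun d => w (d + 1) with hpdef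
  have hp : ∀ n, 0 ≤ p n := fun n => hw _ (by omega)
  have hr : Tendsto (fun n => p (n + 1) / p n) atTop atTop :=
    hratio.comp (tendsto_add_atTop_nat 1)
  have hne : ∀ᶠ n in atTop, p n ≠ 0 := by
    filter_upwards [hr.eventually_gt_atTop 0] with n hn h
    simp [h] at hn
  rw [← tendsto_add_atTop_iff_nat (k + 2)]
  have tsh : Tendsto (fun n => n + (k + 1)) atTop atTop := tendsto_add_atTop_nat (k + 1)
  have hZ : ∀ n : ℕ, ((n + (k+1) : ℕ) + 1 : ℝ) * Zfun w (n + (k + 2)) =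
      coeff (n + (k+1)) (phi p ^ (n + (k+1) + 1)) := by
    intro n
    have := F_formula w (n + (k+1)) 1
    rw [Zfun_eq, show n + (k+2) = n + (k+1) + 1 by omega, this, pow_one, coeff_succ_X_mul]
    simp [p]
  have hS : ∀ᶠ n in atTop, 0 < coeff (n + (k+1)) (phi p ^ (n + (k+1) + 1)) := by
    filter_upwards [tsh.eventually hne] with n hn
    refine lt_of_lt_of_le ?_ (S_lower hp _)
    have : 0 < p 0 := h1
    have : 0 < p (n + (k+1)) := lt_of_le_of_ne (hp _) hn.symm
    positivity
  rw [Metric.tendsto_atTop']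
  intro ε hε
  have hps := tsh.eventually (psi_small hp (h1 : 0 < p 0) hr (ε / (2 * k + 1) / (k + 3)) (by positivity))
  obtain ⟨N0, hN0⟩ := (hS.and hps).exists_forall_of_atTop
  refine ⟨N0, fun n hn => ?_⟩
  obtain ⟨hSn, hpn⟩ := hN0 n hn.le
  have hb := theta_bound hp k (n+1) (by omega)
  have hg := Num_ge' w hw k n
  have hle := Num_le w hw k (n + (k + 2))
  have hz := hZ n
  rw [show n + 1 + k = n + (k+1) by omega] at hb
  rw [show n + 1 + k + 1 = n + (k+2) by omega] at hg
  have hb2 := hb.trans hg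
  set S := coeff (n + (k+1)) (phi p ^ (n + (k+1) + 1)) with hSdef
  set T := coeff (n + (k+1)) (psi p * phi p ^ (n + (k+1))) with hT
  set Nm := Num w k (n + (k+2)) with hNm
  set Z := Zfun w (n + (k+2)) with hZd
  have hM : (0:ℝ) < ((n + (k+1) : ℕ) + 1 : ℝ) := by positivity
  have hZpos : 0 < Z := by
    by_contra hcon
    push Not at hcon
    nlinarith
  rw [← hz, div_mul_eq_mul_div, mul_div_assoc, mul_div_cancel_left₀ _ hM.ne'] at hb2
  rw [← hz] at hpn
  rw [Real.dist_eq, abs_lt]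
  have hle1 : Nm / Z ≤ 1 := (div_le_one hZpos).2 hle
  refine ⟨?_, by linarith⟩
  have : 1 - ε < Nm / Z := by
    rw [lt_div_iff₀ hZpos]
    have hk : (0:ℝ) ≤ k := Nat.cast_nonneg k
    have hn0 : (0:ℝ) ≤ n := Nat.cast_nonneg n
    have q1 : 2 * (k:ℝ) * T ≤ 2 * k * (ε / (2 * k + 1) / (k + 3) * (((n + (k+1) : ℕ) + 1 : ℝ) * Z)) :=
      mul_le_mul_of_nonneg_left hpn (by positivity)
    have q2 : 2 * (k:ℝ) * (ε / (2 * k + 1) / (k + 3) * (((n + (k+1) : ℕ) + 1 : ℝ) * Z)) < (n + 1) * (ε * Z) := by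
      have e : 2 * (k:ℝ) * (ε / (2 * k + 1) / (k + 3) * (((n + (k+1) : ℕ) + 1 : ℝ) * Z))
        = (ε * Z) * ((2 * k / (2 * k + 1)) * ((n + k + 2) / (k + 3))) := by
        push_cast; field_simp; ring
      rw [e, mul_comm _ (ε * Z)]
      refine mul_lt_mul_of_pos_left ?_ (by positivity)
      have a1 : 2 * (k:ℝ) / (2 * k + 1) < 1 := by rw [div_lt_one (by positivity)]; linarith
      have a2 : ((n:ℝ) + k + 2) / (k + 3) ≤ n + 1 := by
        rw [div_le_iff₀ (by positivity)]; nlinarith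
      have a3 : 0 < ((n:ℝ) + k + 2) / (k + 3) := by positivity
      nlinarith
    have q3 : ((n:ℝ) + 1) * Z ≤ ((n + (k+1) : ℕ) : ℝ) * Z := by
      refine mul_le_mul_of_nonneg_right ?_ hZpos.le
      push_cast; linarith
    have q4 : ((n:ℝ) + 1) * ((1 - ε) * Z) < (n + 1) * Nm := by nlinarith
    exact lt_of_mul_lt_mul_left q4 (by positivity)
  linarith

end SGT

/-- Theorem 1: for superexponential weights `w_{n+1}/w_n → ∞`, the measures `ν_N` converge
weakly, in the local (left-ball) topology on the space of rooted planar trees, to the point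
mass on the infinite star (σ(s) = ∞ and all other vertices of degree 1).  In this topology
(where convergence means convergence of the degree of every vertex of the Ulam–Harris tree),
weak convergence to this point mass is equivalent to: for every `k`, with probability
tending to 1, `s` has at least `k` children and its first `k` children are leaves. -/
theorem stmt_18 (w : ℕ → ℝ) (hw : ∀ n, 1 ≤ n → 0 ≤ w n) (h1 : 0 < w 1)
    (h2 : ∃ n, 2 < n ∧ 0 < w n)
    (hratio : Tendsto (fun n => w (n + 1) / w n) atTop atTop) :
    ∀ k : ℕ,
      Tendsto (fun N : ℕ => nu w N
          (fun t => k ≤ t.children.length ∧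
            ∀ c ∈ t.children.take k, c.children.length = 0))
        atTop (nhds 1) := by
  exact SGT.main w hw h1 hratio
end

section
/- With weights w_n = ((n−1)!)^α for α > 1, the partition function satisfies Z_N / ((N−1)!)^α → 1 as N → ∞. -/
open Filter

/-- `Z w N n = Σ_{d_1+⋯+d_N = n} ∏_{i=1}^N w_{d_i+1}` (and `Z w 0 n = [n = 0]`). -/
noncomputable def Z (w : ℕ → ℝ) (N n : ℕ) : ℝ :=
  ∑ d ∈ Finset.Nat.antidiagonalTuple N n, ∏ i, w (d i + 1)

def AA (m n : ℕ) : ℕ :=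
  ∑ d ∈ Finset.Nat.antidiagonalTuple m n, ∏ i, (d i).factorial

lemma AA_succ (m n : ℕ) : AA (m + 1) n =
    ∑ k ∈ Finset.range (n + 1), k.factorial * AA m (n - k) := by
  unfold AA
  simp_rw [Finset.mul_sum]
  rw [Finset.sum_sigma']
  refine Finset.sum_nbij' (fun d => ⟨d 0, Fin.tail d⟩) (fun x => Fin.cons x.1 x.2) ?_ ?_ ?_ ?_ ?_
  · intro d hd
    rw [Finset.Nat.mem_antidiagonalTuple, Fin.sum_univ_succ] at hd
    simp only [Finset.mem_sigma, Finset.mem_range, Finset.Nat.mem_antidiagonalTuple, Fin.tail]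
    omega
  · rintro ⟨k, d⟩ hd
    simp only [Finset.mem_sigma, Finset.mem_range, Finset.Nat.mem_antidiagonalTuple] at hd
    simp only [Finset.Nat.mem_antidiagonalTuple, Fin.sum_univ_succ, Fin.cons_zero, Fin.cons_succ]
    omega
  · intro d _
    simp
  · rintro ⟨k, d⟩ _
    simp
  · intro d _
    simp [Fin.prod_univ_succ, Fin.tail]

lemma fact1 (a b : ℕ) : (a + 1).factorial * (b + 1).factorial ≤ (a + b + 1).factorial := by
  induction b with
  | zero => simp
  | succ b ih =>
    rw [Nat.factorial_succ (b + 1), show a + (b + 1) + 1 = (a + b + 1) + 1 by ring,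
      Nat.factorial_succ (a + b + 1)]
    calc _ = (b + 1 + 1) * ((a + 1).factorial * (b + 1).factorial) := by ring
      _ ≤ _ := Nat.mul_le_mul (by omega) ih

lemma fact2 (a b : ℕ) : (a + 2).factorial * (b + 2).factorial ≤ 2 * (a + b + 2).factorial := by
  induction b with
  | zero => simp [mul_comm]
  | succ b ih =>
    rw [show b + 1 + 2 = (b + 2) + 1 by ring, Nat.factorial_succ (b + 2),
      show a + (b + 1) + 2 = (a + b + 2) + 1 by ring,
      Nat.factorial_succ (a + b + 2)]
    calc _ = (b + 2 + 1) * ((a + 2).factorial * (b + 2).factorial) := by ring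
      _ ≤ (a + b + 2 + 1) * (2 * (a + b + 2).factorial) := Nat.mul_le_mul (by omega) ih
      _ = _ := by ring

lemma conv_le (f : ℕ) : ∑ k ∈ Finset.range (f + 1), (k + 1).factorial * (f - k + 1).factorial
    ≤ 4 * (f + 1).factorial := by
  rcases f with _ | g
  · simp
  rw [Finset.sum_range_succ, Finset.sum_range_succ']
  have h : ∑ k ∈ Finset.range g, (k + 1 + 1).factorial * (g + 1 - (k + 1) + 1).factorial
      ≤ ∑ k ∈ Finset.range g, 2 * (g + 1).factorial := by
    refine Finset.sum_le_sum fun k hk => ?_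
    rw [Finset.mem_range] at hk
    obtain ⟨c, rfl⟩ : ∃ c, g = k + c + 1 := ⟨g - k - 1, by omega⟩
    have := fact2 k c
    rw [show k + c + 1 + 1 - (k + 1) + 1 = c + 2 by omega]
    exact this
  rw [Finset.sum_const, Finset.card_range, smul_eq_mul] at h
  have h2 : g * (2 * (g + 1).factorial) ≤ 2 * (g + 1 + 1).factorial := by
    rw [Nat.factorial_succ (g + 1)]
    nlinarith [Nat.zero_le (g + 1).factorial]
  simp at h ⊢
  linarith

def UU (m n : ℕ) : ℕ :=
  ∑ s ∈ Finset.range (n + 1), m.choose s * 4 ^ s * (n - s + 1).factorial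

lemma UU_succ (m n : ℕ) : UU (m + 1) n = UU m n +
    ∑ s ∈ Finset.range n, m.choose s * 4 ^ (s + 1) * (n - s).factorial := by
  unfold UU
  rw [Finset.sum_range_succ', Finset.sum_range_succ' _ n]
  have : ∀ s ∈ Finset.range n, (m + 1).choose (s + 1) * 4 ^ (s + 1) * (n - (s + 1) + 1).factorial
    = m.choose (s + 1) * 4 ^ (s + 1) * (n - (s + 1) + 1).factorial +
      m.choose s * 4 ^ (s + 1) * (n - s).factorial := by
    intro s hs
    rw [Finset.mem_range] at hs
    rw [show n - (s + 1) + 1 = n - s by omega, Nat.choose_succ_succ]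
    ring
  rw [Finset.sum_congr rfl this, Finset.sum_add_distrib]
  simp
  ring

lemma AA_le (m n : ℕ) : AA m n ≤ UU m n := by
  induction m generalizing n with
  | zero =>
    rcases n with _ | n
    · simp [AA, UU]
    · simp [AA]
  | succ m ih =>
    rw [AA_succ, UU_succ, Finset.sum_range_succ', add_comm]
    refine add_le_add (by simpa using ih n) ?_
    calc _ ≤ ∑ k ∈ Finset.range n, (k + 1).factorial * UU m (n - (k + 1)) :=
          Finset.sum_le_sum fun k _ => Nat.mul_le_mul_left _ (ih _)
      _ = ∑ s ∈ Finset.range n, ∑ k ∈ Finset.range (n - s),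
            (k + 1).factorial * (m.choose s * 4 ^ s * (n - (k + 1) - s + 1).factorial) := by
          unfold UU
          simp_rw [Finset.mul_sum]
          refine Finset.sum_comm' ?_
          intro x y
          simp only [Finset.mem_range]
          omega
      _ ≤ _ := by
          refine Finset.sum_le_sum fun s hs => ?_
          rw [Finset.mem_range] at hs
          obtain ⟨f, rfl⟩ : ∃ f, n = s + f + 1 := ⟨n - s - 1, by omega⟩
          rw [show s + f + 1 - s = f + 1 by omega]
          calc _ = m.choose s * 4 ^ s * ∑ k ∈ Finset.range (f + 1),
                (k + 1).factorial * (f - k + 1).factorial := by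
                rw [Finset.mul_sum]
                refine Finset.sum_congr rfl fun k hk => ?_
                rw [show s + f + 1 - (k + 1) - s + 1 = f - k + 1 by omega]
                ring
            _ ≤ m.choose s * 4 ^ s * (4 * (f + 1).factorial) :=
                Nat.mul_le_mul_left _ (conv_le f)
            _ = _ := by ring

lemma UU_le (n : ℕ) : (UU (n + 1) n : ℝ) ≤ Real.exp 4 * (n + 1).factorial := by
  have h : (UU (n + 1) n : ℝ) =
      (∑ s ∈ Finset.range (n + 1), (4 : ℝ) ^ s / s.factorial) * (n + 1).factorial := by
    unfold UU
    push_cast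
    rw [Finset.sum_mul]
    refine Finset.sum_congr rfl fun s hs => ?_
    rw [Finset.mem_range] at hs
    have h1 := Nat.choose_mul_factorial_mul_factorial hs.le
    rw [show n + 1 - s = n - s + 1 by omega] at h1
    rw [← h1]
    have : (s.factorial : ℝ) ≠ 0 := by positivity
    push_cast
    field_simp
  rw [h]
  gcongr
  exact Real.sum_le_exp_of_nonneg (by norm_num) _

lemma prod_le (N n : ℕ) (d : Fin N → ℕ) (hd : ∑ i, d i = n + 1) (hns : ¬ ∃ i, d i = n + 1) :
    ∏ i, (d i).factorial ≤ n.factorial := by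
  obtain ⟨i, hi⟩ : ∃ i, d i ≠ 0 := by
    by_contra! h
    simp [h] at hd
  have hi' : d i ≠ n + 1 := fun h => hns ⟨i, h⟩
  rw [← Finset.add_sum_erase _ _ (Finset.mem_univ i)] at hd
  rw [← Finset.mul_prod_erase _ _ (Finset.mem_univ i)]
  have h1 := Nat.le_of_dvd (Nat.factorial_pos _)
    (Nat.prod_factorial_dvd_factorial_sum (Finset.univ.erase i) d)
  obtain ⟨a, ha⟩ := Nat.exists_eq_succ_of_ne_zero hi
  obtain ⟨b, hb⟩ : ∃ b, ∑ x ∈ Finset.univ.erase i, d x = b + 1 := 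
    Nat.exists_eq_succ_of_ne_zero (by omega)
  rw [hb] at h1
  rw [ha]
  refine (Nat.mul_le_mul_left _ h1).trans ((fact1 a b).trans ?_)
  exact Nat.factorial_le (by omega)

lemma stars_total (α : ℝ) (N n : ℕ) :
    ∑ d ∈ (Finset.Nat.antidiagonalTuple N (n + 1)).filter (fun d => ∃ i, d i = n + 1),
      ∏ i, ((d i).factorial : ℝ) ^ α = N * ((n + 1).factorial : ℝ) ^ α := by
  have : (Finset.Nat.antidiagonalTuple N (n + 1)).filter (fun d => ∃ i, d i = n + 1)
      = Finset.univ.image (fun i : Fin N => (Pi.single i (n + 1) : Fin N → ℕ)) := by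
    ext d
    simp only [Finset.mem_filter, Finset.Nat.mem_antidiagonalTuple, Finset.mem_image,
      Finset.mem_univ, true_and]
    constructor
    · rintro ⟨h, i, hi⟩
      refine ⟨i, ?_⟩
      rw [← Finset.add_sum_erase _ _ (Finset.mem_univ i)] at h
      have h0 : ∑ x ∈ Finset.univ.erase i, d x = 0 := by omega
      rw [Finset.sum_eq_zero_iff] at h0
      ext j
      by_cases hj : j = i
      · subst hj; simp [hi]
      · simp [hj, h0 j (by simp [hj])]
    · rintro ⟨i, rfl⟩
      exact ⟨by simp, i, by simp⟩
  rw [this, Finset.sum_image]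
  · have : ∀ i : Fin N, ∏ j, (((Pi.single i (n + 1) : Fin N → ℕ) j).factorial : ℝ) ^ α
        = ((n + 1).factorial : ℝ) ^ α := by
      intro i
      rw [Finset.prod_eq_single i]
      · simp
      · intro j _ hj
        simp [hj]
      · simp
    simp [this]
  · intro i _ j _ hij
    by_contra h
    have := congrFun hij i
    simp [h] at this

lemma Z_bounds (α : ℝ) (hα : 1 < α) (n : ℕ) :
    (n + 2 : ℝ) * ((n + 1).factorial : ℝ) ^ α ≤
      Z (fun n => ((n - 1).factorial : ℝ) ^ α) (n + 2) (n + 1) ∧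
    Z (fun n => ((n - 1).factorial : ℝ) ^ α) (n + 2) (n + 1) ≤
      (n + 2 : ℝ) * ((n + 1).factorial : ℝ) ^ α +
        (n.factorial : ℝ) ^ (α - 1) * (Real.exp 4 * (n + 2).factorial) := by
  unfold Z
  simp only [Nat.add_sub_cancel]
  rw [← Finset.sum_filter_add_sum_filter_not _ (fun d => ∃ i, d i = n + 1), stars_total]
  push_cast
  constructor
  · exact le_add_of_nonneg_right (Finset.sum_nonneg fun d _ => by positivity)
  · gcongr
    calc _ ≤ ∑ d ∈ (Finset.Nat.antidiagonalTuple (n + 2) (n + 1)).filter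
            (fun d => ¬ ∃ i, d i = n + 1),
            (n.factorial : ℝ) ^ (α - 1) * ((∏ i, (d i).factorial : ℕ) : ℝ) := by
          refine Finset.sum_le_sum fun d hd => ?_
          rw [Finset.mem_filter, Finset.Nat.mem_antidiagonalTuple] at hd
          have h := prod_le _ n d hd.1 hd.2
          have hpos : 0 < ∏ i, (d i).factorial := Finset.prod_pos fun i _ => Nat.factorial_pos _
          have hpos' : (0 : ℝ) < ((∏ i, (d i).factorial : ℕ) : ℝ) := by exact_mod_cast hpos
          rw [Real.finsetProd_rpow _ _ (fun i _ => by positivity), ← Nat.cast_prod]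
          calc _ = ((∏ i, (d i).factorial : ℕ) : ℝ) ^ (α - 1) *
                ((∏ i, (d i).factorial : ℕ) : ℝ) := by
                rw [← Real.rpow_add_one hpos'.ne']; simp
            _ ≤ _ := by
                gcongr
      _ ≤ ∑ d ∈ Finset.Nat.antidiagonalTuple (n + 2) (n + 1),
            (n.factorial : ℝ) ^ (α - 1) * ((∏ i, (d i).factorial : ℕ) : ℝ) :=
          Finset.sum_le_sum_of_subset_of_nonneg (Finset.filter_subset _ _)
            fun d _ _ => by positivity
      _ = (n.factorial : ℝ) ^ (α - 1) * (AA (n + 2) (n + 1) : ℝ) := by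
          rw [AA, Nat.cast_sum, Finset.mul_sum]
      _ ≤ _ := by
          gcongr
          exact (Nat.cast_le.mpr (AA_le _ _)).trans (UU_le (n + 1))

/-- Remark: with `w_n = ((n−1)!)^α`, `α > 1`, `Z_N / ((N−1)!)^α → 1`. -/
theorem stmt_19 (α : ℝ) (hα : 1 < α) :
    Tendsto (fun N : ℕ =>
        (Z (fun n => ((n - 1).factorial : ℝ) ^ α) N (N - 1) / N) /
          (((N - 1).factorial : ℝ)) ^ α)
      atTop (nhds 1) := by
  rw [← tendsto_add_atTop_iff_nat 2]
  have hlim : Tendsto (fun n : ℕ => 1 + Real.exp 4 * ((n + 1 : ℕ) : ℝ) ^ (-(α - 1)))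
      atTop (nhds 1) := by
    have h1 : Tendsto (fun n : ℕ => ((n + 1 : ℕ) : ℝ)) atTop atTop :=
      tendsto_natCast_atTop_atTop.comp (tendsto_add_atTop_nat 1)
    have := ((tendsto_rpow_neg_atTop (sub_pos.mpr hα)).comp h1).const_mul (Real.exp 4)
    simpa using this.const_add 1
  refine tendsto_of_tendsto_of_tendsto_of_le_of_le tendsto_const_nhds hlim ?_ ?_
  · intro n
    have h := (Z_bounds α hα n).1
    have hp : (0 : ℝ) < ((n + 1).factorial : ℝ) ^ α := by positivity
    simp only [show n + 2 - 1 = n + 1 by omega]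
    rw [div_div, le_div_iff₀ (by positivity)]
    push_cast
    linarith
  · intro n
    have h := (Z_bounds α hα n).2
    have hp : (0 : ℝ) < ((n + 1).factorial : ℝ) ^ α := by positivity
    simp only [show n + 2 - 1 = n + 1 by omega]
    rw [div_div, div_le_iff₀ (by positivity)]
    refine h.trans (le_of_eq ?_)
    have e1 : ((n + 1).factorial : ℝ) ^ α
        = ((n + 1 : ℕ) : ℝ) ^ (α - 1) * (n.factorial : ℝ) ^ (α - 1) * (n + 1).factorial := by
      rw [← Real.mul_rpow (by positivity) (by positivity), ← Nat.cast_mul, ← Nat.factorial_succ,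
        ← Real.rpow_add_one (by positivity)]
      simp
    have e2 : ((n + 1 : ℕ) : ℝ) ^ (-(α - 1)) * ((n + 1 : ℕ) : ℝ) ^ (α - 1) = 1 := by
      rw [← Real.rpow_add (by positivity)]; simp
    have e3 : ((n + 2).factorial : ℝ) = (n + 2) * (n + 1).factorial := by
      rw [Nat.factorial_succ (n + 1)]; push_cast; ring
    rw [add_mul 1, one_mul]
    push_cast at e1 e2 ⊢
    congr 1
    rw [e1, e3]
    linear_combination (-(Real.exp 4 * (n + 2) * (n.factorial : ℝ) ^ (α - 1) *
      (n + 1).factorial)) * e2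
end
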